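/- arXiv:1801.08733 — 4 statements merged into one kernel-verified Lean document; each statement's English description precedes it below -/
import Mathlib

section
/- Let u and v be positive integers. Every bipartite simple graph whose two vertex classes have sizes u and v and which contains no cycle of length 6 has at most 2^{1/3}(uv)^{2/3} + 16(u + v) edges. -/
open Classical in
/-- Relation-level hexagon-freeness. -/
def HexFree {α β : Type} (R : α → β → Prop) : Prop :=
  ∀ a₁ a₂ a₃ : α, ∀ b₁ b₂ b₃ : β, a₁ ≠ a₂ → a₁ ≠ a₃ → a₂ ≠ a₃ → b₁ ≠ b₂ → b₁ ≠ b₃ → b₂ ≠ b₃ →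
    R a₁ b₁ → R a₂ b₁ → R a₂ b₂ → R a₃ b₂ → R a₃ b₃ → R a₁ b₃ → False

theorem HexFree.flip {α β : Type} {R : α → β → Prop} (h : HexFree R) :
    HexFree (fun b a => R a b) := by
  intro b₁ b₂ b₃ a₁ a₂ a₃ h1 h2 h3 h4 h5 h6 r1 r2 r3 r4 r5 r6
  exact h a₁ a₂ a₃ b₂ b₃ b₁ h4 h5 h6 h3 h1.symm h2.symm r2 r3 r4 r5 r6 r1

open Classical in
theorem good_card {α β : Type} [Fintype α] [Fintype β] {R : α → β → Prop} (h : HexFree R)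
    (x : β) (y : α) (hxy : R y x) :
    (Finset.univ.filter (fun a => R a x)).card - 2 ≤
      (Finset.univ.filter (fun a => R a x ∧ a ≠ y ∧
        (Finset.univ.filter (fun z => R a z ∧ R y z)).card ≤ 2)).card := by
  set A := Finset.univ.filter (fun a => R a x ∧ a ≠ y ∧
        (Finset.univ.filter (fun z => R a z ∧ R y z)).card ≤ 2) with hA
  set B := Finset.univ.filter (fun a => R a x ∧ a ≠ y ∧
        2 < (Finset.univ.filter (fun z => R a z ∧ R y z)).card) with hB
  have hB1 : B.card ≤ 1 := by
    rw [Finset.card_le_one]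
    intro a₁ h₁ a₂ h₂
    by_contra hne
    simp only [hB, Finset.mem_filter, Finset.mem_univ, true_and] at h₁ h₂
    obtain ⟨r1, n1, c1⟩ := h₁
    obtain ⟨r2, n2, c2⟩ := h₂
    obtain ⟨z₁, m1, d1⟩ := Finset.exists_mem_ne (lt_trans one_lt_two c1) x
    have : ∃ z ∈ (Finset.univ.filter (fun z => R a₂ z ∧ R y z)), z ∉ ({x, z₁} : Finset β) := by
      apply Finset.exists_mem_notMem_of_card_lt_card
      exact lt_of_le_of_lt Finset.card_le_two c2
    obtain ⟨z₂, m2, d2⟩ := this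
    simp only [Finset.mem_filter, Finset.mem_univ, true_and, Finset.mem_insert,
      Finset.mem_singleton, not_or] at m1 m2 d2
    exact h a₁ y a₂ z₁ z₂ x n1 hne n2.symm (Ne.symm d2.2) d1 d2.1 m1.1 m1.2 m2.2 m2.1 r2 r1
  have hsub : Finset.univ.filter (fun a => R a x) ⊆ (A ∪ B) ∪ {y} := by
    intro a ha
    simp only [hA, hB, Finset.mem_filter, Finset.mem_univ, true_and, Finset.mem_union,
      Finset.mem_singleton] at ha ⊢
    by_cases e : a = y
    · exact Or.inr e
    · left
      rcases le_or_gt (Finset.univ.filter (fun z => R a z ∧ R y z)).card 2 with c | c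
      · exact Or.inl ⟨ha, e, c⟩
      · exact Or.inr ⟨ha, e, c⟩
  have c1 := Finset.card_le_card hsub
  have c2 := Finset.card_union_le (A ∪ B) {y}
  have c3 := Finset.card_union_le A B
  have c4 : ({y} : Finset α).card = 1 := Finset.card_singleton y
  omega

open Classical in
theorem fiber_le {α β : Type} [Fintype α] [Fintype β] {R : α → β → Prop} (h : HexFree R)
    (a : α) (b : β) :
    (Finset.univ.filter (fun p : α × β => R p.1 p.2 ∧
      (R a p.2 ∧ a ≠ p.1 ∧ (Finset.univ.filter (fun z => R a z ∧ R p.1 z)).card ≤ 2) ∧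
      (R p.1 b ∧ b ≠ p.2 ∧ (Finset.univ.filter (fun z => R z b ∧ R z p.2)).card ≤ 2))).card ≤ 2 := by
  by_contra hc
  rw [not_le, Finset.two_lt_card] at hc
  obtain ⟨⟨y₁, x₁⟩, h1, ⟨y₂, x₂⟩, h2, ⟨y₃, x₃⟩, h3, n12, n13, n23⟩ := hc
  simp only [Finset.mem_filter, Finset.mem_univ, true_and] at h1 h2 h3
  obtain ⟨r1, ⟨ra1, ny1, cy1⟩, rb1, nx1, cx1⟩ := h1
  obtain ⟨r2, ⟨ra2, ny2, cy2⟩, rb2, nx2, cx2⟩ := h2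
  obtain ⟨r3, ⟨ra3, ny3, cy3⟩, rb3, nx3, cx3⟩ := h3
  have key : ∀ y y' x x', R y x → R y' x' → R a x → R a x' → R y b → R y' b → a ≠ y → a ≠ y' →
      b ≠ x → b ≠ x' → x = x' ∨ y = y' := by
    intro y y' x x' q1 q2 q3 q4 q5 q6 q7 q8 q9 q10
    by_contra hh
    rw [not_or] at hh
    exact h a y y' x b x' q7 q8 hh.2 (Ne.symm q9) hh.1 q10 q3 q1 q5 q6 q2 q4
  have k12 := key _ _ _ _ r1 r2 ra1 ra2 rb1 rb2 ny1 ny2 nx1 nx2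
  have k13 := key _ _ _ _ r1 r3 ra1 ra3 rb1 rb3 ny1 ny3 nx1 nx3
  have k23 := key _ _ _ _ r2 r3 ra2 ra3 rb2 rb3 ny2 ny3 nx2 nx3
  have hall : (x₁ = x₂ ∧ x₁ = x₃ ∧ y₁ ≠ y₂ ∧ y₁ ≠ y₃ ∧ y₂ ≠ y₃) ∨
      (y₁ = y₂ ∧ y₁ = y₃ ∧ x₁ ≠ x₂ ∧ x₁ ≠ x₃ ∧ x₂ ≠ x₃) := by
    simp only [ne_eq, Prod.mk.injEq] at n12 n13 n23
    grind
  rcases hall with ⟨e1, e2, m1, m2, m3⟩ | ⟨e1, e2, m1, m2, m3⟩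
  · subst e1; subst e2
    refine absurd cx1 (not_le.mpr (Finset.two_lt_card.mpr ⟨y₁, ?_, y₂, ?_, y₃, ?_, m1, m2, m3⟩)) <;>
      simp [*]
  · subst e1; subst e2
    refine absurd cy1 (not_le.mpr (Finset.two_lt_card.mpr ⟨x₁, ?_, x₂, ?_, x₃, ?_, m1, m2, m3⟩)) <;>
      simp [*]

open Classical in
theorem path_count {α β : Type} [Fintype α] [Fintype β] {R : α → β → Prop} (h : HexFree R) :
    ∑ p ∈ Finset.univ.filter (fun p : α × β => R p.1 p.2),
      ((Finset.univ.filter (fun a => R a p.2)).card - 2) *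
      ((Finset.univ.filter (fun b => R p.1 b)).card - 2) ≤
    2 * (Fintype.card α * Fintype.card β) := by
  let Q : α × β → α × β → Prop := fun q p => R p.1 p.2 ∧
      (R q.1 p.2 ∧ q.1 ≠ p.1 ∧ (Finset.univ.filter (fun z => R q.1 z ∧ R p.1 z)).card ≤ 2) ∧
      (R p.1 q.2 ∧ q.2 ≠ p.2 ∧ (Finset.univ.filter (fun z => R z q.2 ∧ R z p.2)).card ≤ 2)
  have hdc := Finset.sum_card_bipartiteAbove_eq_sum_card_bipartiteBelow (s := Finset.univ)
    (t := Finset.univ) Q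
  have hup : ∑ q : α × β, (Finset.bipartiteAbove Q Finset.univ q).card
      ≤ 2 * (Fintype.card α * Fintype.card β) := by
    refine (Finset.sum_le_card_nsmul _ _ 2 ?_).trans ?_
    · intro q _
      exact fiber_le h q.1 q.2
    · simp [mul_comm]
  refine le_trans ?_ (hdc ▸ hup)
  refine le_trans ?_ (Finset.sum_le_sum_of_subset (Finset.subset_univ
    (Finset.univ.filter (fun p : α × β => R p.1 p.2))))
  apply Finset.sum_le_sum
  rintro ⟨y, x⟩ hp
  simp only [Finset.mem_filter, Finset.mem_univ, true_and] at hp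
  have g1 := good_card h x y hp
  have g2 := good_card h.flip y x hp
  refine (Nat.mul_le_mul g1 g2).trans ?_
  rw [← Finset.card_product]
  apply Finset.card_le_card
  rintro ⟨a, b⟩ hab
  simp only [Finset.mem_product, Finset.mem_filter, Finset.mem_univ, true_and] at hab
  simp only [Finset.bipartiteBelow, Finset.mem_filter, Finset.mem_univ, true_and, Q]
  exact ⟨hp, hab.1, hab.2⟩

theorem amgm3 (X Y Z : ℝ) (hX : 0 < X) (hY : 0 < Y) (hZ : 0 < Z) (h : X * Y * Z = 1) :
    3 ≤ X + Y + Z := by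
  have := Real.geom_mean_le_arith_mean3_weighted (w₁ := 1/3) (w₂ := 1/3) (w₃ := 1/3)
    (by norm_num) (by norm_num) (by norm_num) hX.le hY.le hZ.le (by norm_num)
  rw [← Real.mul_rpow hX.le hY.le, ← Real.mul_rpow (by positivity) hZ.le, h, Real.one_rpow] at this
  linarith

theorem edge_ineq (p q : ℕ) (hp : 0 < p) (hq : 0 < q) (x y z : ℝ) (hx : 0 < x) (hy : 0 < y)
    (hz : 0 < z) (h : x * y * z = 1) :
    3 * (1 - 2 * (1 / (p : ℝ)) - 2 * (1 / (q : ℝ))) ≤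
      x * (((p - 2) * (q - 2) : ℕ) : ℝ) + y * (1 / (p : ℝ)) + z * (1 / (q : ℝ)) := by
  have hp' : (0 : ℝ) < p := by exact_mod_cast hp
  have hq' : (0 : ℝ) < q := by exact_mod_cast hq
  have hpos : 0 ≤ x * (((p - 2) * (q - 2) : ℕ) : ℝ) + y * (1 / (p : ℝ)) + z * (1 / (q : ℝ)) := by
    positivity
  have small : ∀ n : ℕ, 0 < n → n < 2 → 1 ≤ 1 / (n : ℝ) := by
    intro n h1 h2
    have : n = 1 := by omega
    subst this; norm_num
  have ip : 0 < 1 / (p : ℝ) := by positivity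
  have iq : 0 < 1 / (q : ℝ) := by positivity
  rcases lt_or_ge p 2 with h1 | h1
  · linarith [small p hp h1]
  rcases lt_or_ge q 2 with h2 | h2
  · linarith [small q hq h2]
  have ag := amgm3 (x * (p * q)) (y * (1 / p)) (z * (1 / q)) (by positivity) (by positivity)
    (by positivity) (by field_simp; exact h)
  have h1' : (2 : ℝ) ≤ p := by exact_mod_cast h1
  have h2' : (2 : ℝ) ≤ q := by exact_mod_cast h2
  push_cast [Nat.cast_sub h1, Nat.cast_sub h2]
  set s := 1 / (p : ℝ) with hs
  set r := 1 / (q : ℝ) with hr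
  have sp : s * p = 1 := by rw [hs]; field_simp
  have rq : r * q = 1 := by rw [hr]; field_simp
  have s2 : 2 * s ≤ 1 := by nlinarith
  have r2 : 2 * r ≤ 1 := by nlinarith
  have e1 : x * ((p - 2) * (q - 2)) = ((1 - 2 * s) * (1 - 2 * r)) * (x * (p * q)) := by
    have : ((p : ℝ) - 2) = (1 - 2 * s) * p := by linear_combination 2 * sp
    rw [this]
    have : ((q : ℝ) - 2) = (1 - 2 * r) * q := by linear_combination 2 * rq
    rw [this]; ring
  rw [e1]
  have w0 : 0 ≤ (1 - 2 * s) * (1 - 2 * r) := mul_nonneg (by linarith) (by linarith)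
  have w1 : (1 - 2 * s) * (1 - 2 * r) ≤ 1 := by
    apply mul_le_one₀ <;> linarith
  have m1 := mul_le_mul_of_nonneg_left ag w0
  have m2 := mul_le_mul_of_nonneg_right w1 (by positivity : 0 ≤ y * s)
  have m3 := mul_le_mul_of_nonneg_right w1 (by positivity : 0 ≤ z * r)
  nlinarith [mul_pos ip iq]

open Classical in
theorem recip_sum {α β : Type} [Fintype α] [Fintype β] (R : α → β → Prop) :
    ∑ p ∈ Finset.univ.filter (fun p : α × β => R p.1 p.2),
      1 / ((Finset.univ.filter (fun b => R p.1 b)).card : ℝ) ≤ Fintype.card α := by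
  rw [Finset.sum_filter, Fintype.sum_prod_type]
  have : ∀ a : α, ∑ b : β, (if R a b then
      1 / ((Finset.univ.filter (fun b => R a b)).card : ℝ) else 0) ≤ 1 := by
    intro a
    rw [← Finset.sum_filter, Finset.sum_const, nsmul_eq_mul]
    rw [mul_one_div]
    exact div_self_le_one _
  refine (Finset.sum_le_sum (fun a _ => this a)).trans ?_
  simp

open Classical in
theorem recip_sum' {α β : Type} [Fintype α] [Fintype β] (R : α → β → Prop) :
    ∑ p ∈ Finset.univ.filter (fun p : α × β => R p.1 p.2),
      1 / ((Finset.univ.filter (fun a => R a p.2)).card : ℝ) ≤ Fintype.card β := by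
  rw [Finset.sum_filter, Fintype.sum_prod_type, Finset.sum_comm]
  have : ∀ b : β, ∑ a : α, (if R a b then
      1 / ((Finset.univ.filter (fun a => R a b)).card : ℝ) else 0) ≤ 1 := by
    intro b
    rw [← Finset.sum_filter, Finset.sum_const, nsmul_eq_mul]
    rw [mul_one_div]
    exact div_self_le_one _
  refine (Finset.sum_le_sum (fun a _ => this a)).trans ?_
  simp

open Classical in
theorem rel_bound {α β : Type} [Fintype α] [Fintype β] {R : α → β → Prop} (h : HexFree R)
    (t : ℝ) (ht : 0 < t) (hu : 0 < Fintype.card α) (hv : 0 < Fintype.card β)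
    (h3 : t ^ 3 = 2 * ((Fintype.card α : ℝ) * Fintype.card β) ^ 2) :
    ((Finset.univ.filter (fun p : α × β => R p.1 p.2)).card : ℝ) ≤
      t + 2 * ((Fintype.card α : ℝ) + Fintype.card β) := by
  have hP := path_count h
  have hP' : ((∑ p ∈ Finset.univ.filter (fun p : α × β => R p.1 p.2),
      ((Finset.univ.filter (fun a => R a p.2)).card - 2) *
      ((Finset.univ.filter (fun b => R p.1 b)).card - 2) : ℕ) : ℝ) ≤
      ((2 * (Fintype.card α * Fintype.card β) : ℕ) : ℝ) := by exact_mod_cast hP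
  rw [Nat.cast_sum] at hP'
  have hA := recip_sum R
  have hB := recip_sum' R
  set u : ℝ := (Fintype.card α : ℝ) with hu_def
  set v : ℝ := (Fintype.card β : ℝ) with hv_def
  have u0 : 0 < u := by rw [hu_def]; exact_mod_cast hu
  have v0 : 0 < v := by rw [hv_def]; exact_mod_cast hv
  have hE := Finset.sum_le_sum (s := Finset.univ.filter (fun p : α × β => R p.1 p.2))
    (fun p hp => edge_ineq (Finset.univ.filter (fun a => R a p.2)).card
      (Finset.univ.filter (fun b => R p.1 b)).card
      (Finset.card_pos.mpr ⟨p.1, by simpa using hp⟩)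
      (Finset.card_pos.mpr ⟨p.2, by simpa using hp⟩)
      (t / (2 * (u * v))) (t / v) (t / u) (by positivity) (by positivity) (by positivity)
      (by field_simp; linear_combination h3))
  simp only [Finset.sum_add_distrib, Finset.sum_sub_distrib, ← Finset.mul_sum, Finset.sum_const,
    nsmul_eq_mul, mul_one] at hE
  push_cast at hP'
  have q1 := mul_le_mul_of_nonneg_left hP' (by positivity : 0 ≤ t / (2 * (u * v)))
  have q2 := mul_le_mul_of_nonneg_left hB (by positivity : 0 ≤ t / v)
  have q3 := mul_le_mul_of_nonneg_left hA (by positivity : 0 ≤ t / u)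
  have z1 : t / (2 * (u * v)) * (2 * (u * v)) = t := by field_simp
  have z2 : t / v * v = t := by field_simp
  have z3 : t / u * u = t := by field_simp
  rw [← hu_def, ← hv_def, z1] at q1
  rw [z2] at q2
  rw [z3] at q3
  push_cast at hE
  linarith

/-- A simple graph contains no cycle of length 6. -/
def C6Free {V : Type*} (G : SimpleGraph V) : Prop :=
  ∀ (v : V) (w : G.Walk v v), w.IsCycle → w.length ≠ 6

/-- Every `C₆`-free bipartite simple graph with vertex classes of sizes `u` and `v` has at
most `2^{1/3}(uv)^{2/3} + 16(u + v)` edges. -/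
theorem ex_C6_bipartite_le (u v : ℕ) (hu : 0 < u) (hv : 0 < v)
    (G : SimpleGraph (Fin u ⊕ Fin v))
    (hbipL : ∀ a b : Fin u, ¬ G.Adj (Sum.inl a) (Sum.inl b))
    (hbipR : ∀ a b : Fin v, ¬ G.Adj (Sum.inr a) (Sum.inr b))
    (hC6 : C6Free G) :
    (G.edgeSet.ncard : ℝ) ≤
      (2 : ℝ) ^ ((1 : ℝ) / 3) * ((u : ℝ) * (v : ℝ)) ^ ((2 : ℝ) / 3) +
        16 * ((u : ℝ) + (v : ℝ)) := by
  classical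
  let R : Fin u → Fin v → Prop := fun a b => G.Adj (Sum.inl a) (Sum.inr b)
  have hR : HexFree R := by
    intro a₁ a₂ a₃ b₁ b₂ b₃ h1 h2 h3 h4 h5 h6 r1 r2 r3 r4 r5 r6
    let w : G.Walk (Sum.inl a₁) (Sum.inl a₁) :=
      .cons r1 (.cons r2.symm (.cons r3 (.cons r4.symm (.cons r5 (.cons r6.symm .nil)))))
    refine hC6 _ w ?_ rfl
    rw [SimpleGraph.Walk.isCycle_def, SimpleGraph.Walk.isTrail_def]
    refine ⟨?_, by simp [w], ?_⟩
    · simp [w, h1, h2, h3, h4, h5, h6, h1.symm, h2.symm, h3.symm, h4.symm, h5.symm, h6.symm]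
    · simp [w, h1, h2, h3, h4, h5, h6, h1.symm, h2.symm, h3.symm, h4.symm, h5.symm, h6.symm]
  have u0 : (0 : ℝ) < u := by exact_mod_cast hu
  have v0 : (0 : ℝ) < v := by exact_mod_cast hv
  have key := rel_bound hR ((2 : ℝ) ^ ((1 : ℝ) / 3) * ((u : ℝ) * (v : ℝ)) ^ ((2 : ℝ) / 3))
    (by positivity) (by simpa using hu) (by simpa using hv) (by
      rw [mul_pow, ← Real.rpow_natCast, ← Real.rpow_natCast, ← Real.rpow_mul (by norm_num),
        ← Real.rpow_mul (by positivity)]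
      norm_num)
  simp only [Fintype.card_fin] at key
  have hcard : G.edgeSet.ncard ≤
      (Finset.univ.filter (fun p : Fin u × Fin v => R p.1 p.2)).card := by
    rw [← Set.ncard_coe_finset]
    refine le_trans (Set.ncard_le_ncard (t := (fun p : Fin u × Fin v =>
      s(Sum.inl p.1, (Sum.inr p.2 : Fin u ⊕ Fin v))) '' _) ?_ (Set.toFinite _))
      (Set.ncard_image_le (Set.toFinite _))
    intro e he
    induction e using Sym2.ind with
    | _ p q =>
      rw [SimpleGraph.mem_edgeSet] at he
      rcases p with a | b <;> rcases q with c | d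
      · exact absurd he (hbipL _ _)
      · exact ⟨(a, d), by simpa [R] using he, rfl⟩
      · exact ⟨(c, b), by simpa [R] using he.symm, Sym2.eq_swap⟩
      · exact absurd he (hbipR _ _)
  have hcard' : (G.edgeSet.ncard : ℝ) ≤
      ((Finset.univ.filter (fun p : Fin u × Fin v => R p.1 p.2)).card : ℝ) := by
    exact_mod_cast hcard
  linarith
end

section
/- For every δ > 0 there exists a constant C = C(δ) such that for all sufficiently large real x and every integer i with 1 ≤ i ≤ (1 − δ) log log x, the number N_i(x) of positive integers n ≤ x with Ω(n) ≤ i satisfies N_i(x) < C · (x / log x) · (log log x)^{i−1} / (i−1)!. -/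
open Finset

lemma sum_inj_le {α β : Type*} [DecidableEq β] (s : Finset α) (t : Finset β) (f : α → ℝ) (g : β → ℝ)
    (e : α → β) (he : ∀ a ∈ s, f a ≠ 0 → e a ∈ t)
    (hi : ∀ a ∈ s, ∀ b ∈ s, e a = e b → a = b) (hg : ∀ b ∈ t, 0 ≤ g b)
    (hfg : ∀ a ∈ s, f a ≠ 0 → f a ≤ g (e a)) : ∑ a ∈ s, f a ≤ ∑ b ∈ t, g b := by
  classical
  rw [← Finset.sum_filter_ne_zero]
  calc ∑ a ∈ s with f a ≠ 0, f a ≤ ∑ a ∈ s with f a ≠ 0, g (e a) :=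
        Finset.sum_le_sum fun a ha => hfg a (mem_filter.1 ha).1 (mem_filter.1 ha).2
    _ = ∑ b ∈ (s.filter (fun a => f a ≠ 0)).image e, g b := by
        rw [Finset.sum_image]
        intro a ha b hb h
        exact hi a (mem_filter.1 ha).1 b (mem_filter.1 hb).1 h
    _ ≤ _ := by
        apply Finset.sum_le_sum_of_subset_of_nonneg
        · intro b hb
          obtain ⟨a, ha, rfl⟩ := mem_image.1 hb
          exact he a (mem_filter.1 ha).1 (mem_filter.1 ha).2
        · intro b hb _
          exact hg b hb

lemma mertens_one (N : ℕ) (hN : 1 ≤ N) :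
    ∑ p ∈ Ioc 0 N with p.Prime, Real.log p / p ≤ Real.log N + Real.log 4 := by
  have hd : (∏ p ∈ Ioc 0 N with p.Prime, p ^ (N / p)) ∣ N.factorial := by
    apply Finset.prod_dvd_of_isRelPrime
    · intro p hp q hq hpq
      simp only [coe_filter, Set.mem_ofPred_eq] at hp hq
      show IsRelPrime (p ^ (N / p)) (q ^ (N / q))
      rw [← Nat.coprime_iff_isRelPrime]
      exact Nat.Coprime.pow _ _ ((Nat.coprime_primes hp.2 hq.2).2 hpq)
    · intro p hp
      simp only [mem_filter, mem_Ioc] at hp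
      rw [hp.2.pow_dvd_iff_le_factorization (Nat.factorial_ne_zero _),
        Nat.factorization_factorial hp.2 (Nat.lt_succ_self (Nat.log p N))]
      have : 1 ∈ Ico 1 (Nat.log p N + 1) := by
        simp only [mem_Ico, le_refl, true_and]
        have := Nat.log_pos hp.2.one_lt hp.1.2
        omega
      simpa using Finset.single_le_sum (f := fun i => N / p ^ i) (fun _ _ => Nat.zero_le _) this
  have hle : (∏ p ∈ Ioc 0 N with p.Prime, p ^ (N / p)) ≤ N ^ N :=
    (Nat.le_of_dvd (Nat.factorial_pos _) hd).trans (Nat.factorial_le_pow N)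
  have hlog : ∑ p ∈ Ioc 0 N with p.Prime, ((N / p : ℕ) : ℝ) * Real.log p ≤ N * Real.log N := by
    have h1 : ((∏ p ∈ Ioc 0 N with p.Prime, p ^ (N / p) : ℕ) : ℝ) ≤ (N : ℝ) ^ N := by
      exact_mod_cast hle
    have h2 := Real.log_le_log (by
      push_cast
      apply Finset.prod_pos
      intro p hp
      have := (mem_filter.1 hp).2.pos
      positivity) h1
    push_cast at h2
    rw [Real.log_prod, Real.log_pow] at h2
    · simpa [Real.log_pow] using h2
    · intro p hp
      have := (mem_filter.1 hp).2.pos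
      positivity
  have hth := Chebyshev.theta_le_log4_mul_x (x := (N : ℝ)) (by positivity)
  unfold Chebyshev.theta at hth
  rw [Nat.floor_natCast] at hth
  have hN' : (0 : ℝ) < N := by exact_mod_cast hN
  have key : N * ∑ p ∈ Ioc 0 N with p.Prime, Real.log p / p ≤
      ∑ p ∈ Ioc 0 N with p.Prime, ((N / p : ℕ) : ℝ) * Real.log p +
      ∑ p ∈ Ioc 0 N with p.Prime, Real.log p := by
    rw [Finset.mul_sum, ← Finset.sum_add_distrib]
    apply Finset.sum_le_sum
    intro p hp
    have hp0 := (mem_filter.1 hp).2.pos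
    have hl : 0 ≤ Real.log p := Real.log_natCast_nonneg p
    have h3 : (N : ℝ) / p ≤ ((N / p : ℕ) : ℝ) + 1 := by
      rw [div_le_iff₀ (by exact_mod_cast hp0)]
      have := (Nat.lt_div_mul_add (a := N) hp0).le
      have : N ≤ (N / p + 1) * p := by linarith
      exact_mod_cast this
    calc (N : ℝ) * (Real.log p / p) = (N / p) * Real.log p := by ring
      _ ≤ (((N / p : ℕ) : ℝ) + 1) * Real.log p := by gcongr
      _ = _ := by ring
  have : N * ∑ p ∈ Ioc 0 N with p.Prime, Real.log p / p ≤ N * (Real.log N + Real.log 4) := by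
    linarith
  exact le_of_mul_le_mul_left this hN'

lemma mertens_aux (N : ℕ) (hN : 2 ≤ N) :
    ∑ p ∈ Ioc 0 N with p.Prime, (1 : ℝ) / p
      - (∑ p ∈ Ioc 0 N with p.Prime, Real.log p / p) / Real.log N ≤
    Real.log (Real.log N) - Real.log (Real.log 2)
      + Real.log 4 * (1 / Real.log 2 - 1 / Real.log N) := by
  induction N, hN using Nat.le_induction with
  | base =>
    have : (Ioc 0 2).filter Nat.Prime = {2} := by decide
    have h2 : Real.log 2 ≠ 0 := (Real.log_pos (by norm_num)).ne'
    simp only [this, sum_singleton]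
    push_cast
    field_simp
    simp
  | succ N hN ih =>
    have hN2 : (2 : ℝ) ≤ N := by exact_mod_cast hN
    have hl : 0 < Real.log N := Real.log_pos (by linarith)
    have hll : Real.log N < Real.log (N + 1) := Real.log_lt_log (by linarith) (by linarith)
    have hA := mertens_one N (by omega)
    set A := ∑ p ∈ Ioc 0 N with p.Prime, Real.log p / p
    set a := Real.log N
    set b := Real.log ((N : ℝ) + 1) with hb
    have hbp : 0 < b := hl.trans hll
    have hstep : ∑ p ∈ Ioc 0 (N+1) with p.Prime, (1 : ℝ) / p
      - (∑ p ∈ Ioc 0 (N+1) with p.Prime, Real.log p / p) / Real.log (N+1 : ℕ) =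
      ∑ p ∈ Ioc 0 N with p.Prime, (1 : ℝ) / p - A / b := by
      have hcast : Real.log ((N + 1 : ℕ) : ℝ) = b := by rw [hb]; push_cast; rfl
      have hins : Ioc 0 (N+1) = insert (N+1) (Ioc 0 N) := by ext; simp; omega
      have hne : (N+1) ∉ (Ioc 0 N).filter Nat.Prime := by simp
      rw [hcast, hins, Finset.filter_insert]
      split_ifs with hp
      · rw [Finset.sum_insert hne, Finset.sum_insert hne, hcast]
        field_simp
        ring
      · rfl
    rw [hstep]
    have hlog : 1 - a / b ≤ Real.log b - Real.log a := by
      have := Real.one_sub_inv_le_log_of_pos (x := b / a) (by positivity)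
      rw [inv_div, Real.log_div hbp.ne' hl.ne'] at this
      exact this
    have hd : 0 ≤ 1 / a - 1 / b := by
      rw [sub_nonneg]; exact one_div_le_one_div_of_le hl hll.le
    have h5 : A * (1 / a - 1 / b) ≤ (a + Real.log 4) * (1 / a - 1 / b) := by gcongr
    have h6 : a * (1 / a - 1 / b) = 1 - a / b := by field_simp
    push_cast
    rw [← hb]
    have h7 : A * (1 / a - 1 / b) = A / a - A / b := by ring
    nlinarith

lemma mertens_two : ∃ B : ℝ, 0 ≤ B ∧ ∀ N : ℕ, 2 ≤ N →
    ∑ p ∈ Ioc 0 N with p.Prime, (1 : ℝ) / p ≤ Real.log (Real.log N) + B := by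
  have h2 : 0 < Real.log 2 := Real.log_pos (by norm_num)
  have h4 : 0 < Real.log 4 := Real.log_pos (by norm_num)
  have hll2 : Real.log (Real.log 2) ≤ 0 := 
    Real.log_nonpos h2.le (by linarith [Real.log_two_lt_d9])
  refine ⟨1 + 2 * Real.log 4 / Real.log 2 - Real.log (Real.log 2), ?_, ?_⟩
  · have : 0 ≤ 2 * Real.log 4 / Real.log 2 := by positivity
    linarith
  · intro N hN
    have hN2 : (2 : ℝ) ≤ N := by exact_mod_cast hN
    have hl : Real.log 2 ≤ Real.log N := Real.log_le_log (by norm_num) hN2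
    have hlp : 0 < Real.log N := by linarith
    have h := mertens_aux N hN
    have hA := mertens_one N (by omega)
    have h1 : (∑ p ∈ Ioc 0 N with p.Prime, Real.log p / p) / Real.log N ≤
        1 + Real.log 4 / Real.log N := by
      rw [div_le_iff₀ hlp]
      calc _ ≤ _ := hA
        _ = _ := by field_simp
    have h3 : 0 ≤ Real.log 4 / Real.log 2 := by positivity
    have e1 : Real.log 4 * (1 / Real.log 2 - 1 / Real.log N) = Real.log 4 / Real.log 2 - Real.log 4 / Real.log N := by ring
    have e2 : 2 * Real.log 4 / Real.log 2 = Real.log 4 / Real.log 2 + Real.log 4 / Real.log 2 := by ring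
    linarith

lemma esymm_le (s : Finset ℕ) (f : ℕ → ℝ) (hf : ∀ i, 0 ≤ f i) (k : ℕ) :
    ∑ t ∈ s.powersetCard k, ∏ i ∈ t, f i ≤ (∑ i ∈ s, f i) ^ k / k.factorial := by
  induction s using Finset.induction_on generalizing k with
  | empty =>
    cases k with
    | zero => simp
    | succ k =>
      rw [Finset.powersetCard_eq_empty.2 (by simp)]
      simp
  | insert a s ha ih =>
    cases k with
    | zero => simp
    | succ k =>
      have hP : 0 ≤ ∑ i ∈ s, f i := Finset.sum_nonneg fun i _ => hf i
      rw [Finset.powersetCard_succ_insert ha, Finset.sum_union, Finset.sum_image, Finset.sum_insert ha]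
      · have e : ∑ t ∈ s.powersetCard k, ∏ i ∈ insert a t, f i =
            f a * ∑ t ∈ s.powersetCard k, ∏ i ∈ t, f i := by
          rw [Finset.mul_sum]
          apply Finset.sum_congr rfl
          intro t ht
          rw [Finset.prod_insert]
          intro h
          exact ha ((Finset.mem_powersetCard.1 ht).1 h)
        rw [e]
        have h1 := ih (k+1)
        have h2 := mul_le_mul_of_nonneg_left (ih k) (hf a)
        set P := ∑ i ∈ s, f i
        have h3 : P ^ (k+1) + (k+1) * P ^ k * f a ≤ (f a + P) ^ (k+1) := by
          have h := pow_add_mul_le_add_pow (a := P) (b := f a) hP (by linarith [hf a]) (k+1)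
          rw [add_comm (f a) P]
          simpa using h
        calc _ ≤ P ^ (k+1) / (k+1).factorial + f a * (P ^ k / k.factorial) := add_le_add h1 h2
          _ = (P ^ (k+1) + (k+1) * P ^ k * f a) / (k+1).factorial := by
            rw [Nat.factorial_succ]; push_cast
            have : (k.factorial : ℝ) ≠ 0 := by positivity
            field_simp
          _ ≤ _ := by gcongr
      · intro t ht u hu h
        have ht' : a ∉ t := fun h => ha ((Finset.mem_powersetCard.1 ht).1 h)
        have hu' : a ∉ u := fun h => ha ((Finset.mem_powersetCard.1 hu).1 h)
        rw [← Finset.erase_insert ht', ← Finset.erase_insert hu']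
        exact congrArg (fun v => Finset.erase v a) h
      · rw [Finset.disjoint_left]
        intro t ht hu
        obtain ⟨u, hu, rfl⟩ := Finset.mem_image.1 hu
        exact ha ((Finset.mem_powersetCard.1 ht).1 (Finset.mem_insert_self _ _))

lemma sqfree_sum (N j : ℕ) :
    ∑ r ∈ Ioc 0 N with (Squarefree r ∧ r.primeFactorsList.length ≤ j), (1 : ℝ) / r ≤
      ∑ k ∈ range (j + 1), (∑ p ∈ Ioc 0 N with p.Prime, (1 : ℝ) / p) ^ k / k.factorial := by
  refine le_trans ?_ (Finset.sum_le_sum fun k _ =>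
    esymm_le ((Ioc 0 N).filter Nat.Prime) (fun p => (1 : ℝ) / p) (fun _ => by positivity) k)
  rw [Finset.sum_sigma']
  apply sum_inj_le _ _ _ _ (fun r => (⟨r.primeFactors.card, r.primeFactors⟩ : Σ _ : ℕ, Finset ℕ))
  · intro r hr _
    simp only [mem_filter, mem_Ioc] at hr
    simp only [mem_sigma, mem_range, mem_powersetCard, and_true]
    constructor
    · have : r.primeFactors.card ≤ r.primeFactorsList.length := List.toFinset_card_le _
      omega
    · intro p hp
      have h1 := Nat.prime_of_mem_primeFactors hp
      have h2 := Nat.le_of_mem_primeFactors hp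
      simp only [mem_filter, mem_Ioc]
      exact ⟨⟨h1.pos, by omega⟩, h1⟩
  · intro a ha b hb h
    simp only [mem_filter] at ha hb
    have h' : a.primeFactors = b.primeFactors := by
      simp only [Sigma.mk.injEq, heq_eq_eq] at h
      exact h.2
    rw [← Nat.prod_primeFactors_of_squarefree ha.2.1, ← Nat.prod_primeFactors_of_squarefree hb.2.1, h']
  · intro b _
    exact Finset.prod_nonneg fun _ _ => by positivity
  · intro r hr _
    simp only [mem_filter] at hr
    conv_lhs => rw [← Nat.prod_primeFactors_of_squarefree hr.2.1]
    push_cast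
    simp

lemma all_sum (N j : ℕ) :
    ∑ m ∈ Ioc 0 N with m.primeFactorsList.length ≤ j, (1 : ℝ) / m ≤
      (∑' b : ℕ, (1 : ℝ) / (b : ℝ) ^ 2) *
      ∑ k ∈ range (j + 1), (∑ p ∈ Ioc 0 N with p.Prime, (1 : ℝ) / p) ^ k / k.factorial := by
  have hs : Summable (fun b : ℕ => (1 : ℝ) / (b : ℝ) ^ 2) :=
    Real.summable_one_div_nat_pow.2 (by norm_num)
  have h1 : ∑ b ∈ Ioc 0 N, (1 : ℝ) / (b : ℝ) ^ 2 ≤ ∑' b : ℕ, (1 : ℝ) / (b : ℝ) ^ 2 :=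
    hs.sum_le_tsum _ fun _ _ => by positivity
  have h2 := sqfree_sum N j
  refine le_trans ?_ (mul_le_mul h1 h2 (Finset.sum_nonneg fun _ _ => by positivity)
    (tsum_nonneg fun _ => by positivity))
  rw [Finset.sum_mul_sum, ← Finset.sum_product']
  choose r b hb hr using Nat.sq_mul_squarefree
  apply sum_inj_le _ _ _ _ (fun m => (b m, r m))
  · intro m hm _
    simp only [mem_filter, mem_Ioc] at hm
    have hbm := hb m
    have hb0 : b m ≠ 0 := by
      rintro h; rw [h] at hbm; simp at hbm; omega
    have hr0 : r m ≠ 0 := by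
      rintro h; rw [h] at hbm; simp at hbm; omega
    have hbd : b m ≤ m := Nat.le_of_dvd hm.1.1 ⟨b m * r m, by rw [← mul_assoc, ← sq]; exact hbm.symm⟩
    have hrd : r m ∣ m := ⟨b m ^ 2, by rw [mul_comm]; exact hbm.symm⟩
    have hrl := Nat.le_of_dvd hm.1.1 hrd
    have hlen : (r m).primeFactorsList.length ≤ m.primeFactorsList.length :=
      (Nat.primeFactorsList_sublist_of_dvd hrd (by omega)).length_le
    simp only [mem_product, mem_filter, mem_Ioc]
    exact ⟨⟨by omega, by omega⟩, ⟨by omega, by omega⟩, hr m, by omega⟩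
  · intro a _ c _ h
    simp only [Prod.mk.injEq] at h
    rw [← hb a, ← hb c, h.1, h.2]
  · intro b _
    positivity
  · intro m _ _
    conv_lhs => rw [← hb m]
    push_cast
    apply le_of_eq
    rw [one_div_mul_one_div]

lemma log_sum (x : ℝ) (hx : 0 ≤ x) (i : ℕ) (hi : 1 ≤ i) :
    ∑ n ∈ Icc 1 ⌊x⌋₊ with n.primeFactorsList.length ≤ i, Real.log n ≤
      (Real.log 4 + 4) * x *
        ∑ m ∈ Ioc 0 ⌊x⌋₊ with m.primeFactorsList.length ≤ i - 1, (1 : ℝ) / m := by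
  have h1 : ∑ m ∈ Ioc 0 ⌊x⌋₊ with m.primeFactorsList.length ≤ i - 1, Chebyshev.psi (x / m) ≤
      (Real.log 4 + 4) * x *
        ∑ m ∈ Ioc 0 ⌊x⌋₊ with m.primeFactorsList.length ≤ i - 1, (1 : ℝ) / m := by
    rw [Finset.mul_sum]
    apply Finset.sum_le_sum
    intro m _
    refine (Chebyshev.psi_le_const_mul_self (by positivity)).trans (le_of_eq ?_)
    ring
  refine le_trans ?_ h1
  unfold Chebyshev.psi
  simp_rw [← ArithmeticFunction.vonMangoldt_sum]
  rw [Finset.sum_sigma', Finset.sum_sigma']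
  apply sum_inj_le _ _ _ _
    (fun a : (Σ _ : ℕ, ℕ) => (⟨a.1 / a.2, a.2⟩ : Σ _ : ℕ, ℕ))
  · rintro ⟨n, d⟩ ha hne
    simp only [mem_sigma, mem_filter, mem_Icc, Nat.mem_divisors] at ha
    obtain ⟨⟨⟨hn1, hnx⟩, hlen⟩, ⟨m, rfl⟩, hn0⟩ := ha
    have hpp := ArithmeticFunction.vonMangoldt_ne_zero_iff.1 hne
    simp only at hpp
    have hd0 : 0 < d := hpp.pos
    have hm0 : 0 < m := by
      rcases Nat.eq_zero_or_pos m with h | h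
      · simp [h] at hn0
      · exact h
    have hdl : 1 ≤ d.primeFactorsList.length := by
      rw [Nat.one_le_iff_ne_zero, Ne, List.length_eq_zero_iff, Nat.primeFactorsList_eq_nil]
      have := hpp.one_lt
      omega
    rw [(Nat.perm_primeFactorsList_mul hd0.ne' hm0.ne').length_eq, List.length_append] at hlen
    have hdm : (d * m : ℕ) ≤ x := (Nat.le_floor_iff hx).1 hnx
    simp only [mem_sigma, mem_filter, mem_Ioc, Nat.mul_div_cancel_left m hd0]
    refine ⟨⟨⟨hm0, ?_⟩, by omega⟩, hd0, ?_⟩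
    · exact (Nat.le_mul_of_pos_left m hd0).trans hnx
    · apply Nat.le_floor
      rw [le_div_iff₀ (by exact_mod_cast hm0)]
      exact_mod_cast hdm
  · rintro ⟨n, d⟩ ha ⟨n', d'⟩ hb h
    simp only [mem_sigma, mem_filter, mem_Icc, Nat.mem_divisors] at ha hb
    simp only [Sigma.mk.injEq, heq_eq_eq] at h
    obtain ⟨h3, rfl⟩ := h
    have : n = n' := by
      rw [← Nat.div_mul_cancel ha.2.1, ← Nat.div_mul_cancel hb.2.1, h3]
    rw [this]
  · intro b _
    exact ArithmeticFunction.vonMangoldt_nonneg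
  · intro a _ _
    exact le_rfl

lemma exp_partial (δ L : ℝ) (hδ : 0 < δ) (hL : 0 < L) (j : ℕ) (hj : (j : ℝ) ≤ (1 - δ) * L) :
    ∑ k ∈ range (j + 1), L ^ k / k.factorial ≤ 1 / δ * (L ^ j / j.factorial) := by
  induction j with
  | zero =>
    have : 0 ≤ 1 - δ := by
      by_contra h
      push Not at h
      have := mul_neg_of_neg_of_pos h hL
      simp at hj
      linarith
    simp
    rw [one_le_inv₀ hδ]; linarith
  | succ j ih =>
    push_cast at hj
    rw [Finset.sum_range_succ]
    have h1 := ih (by linarith)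
    have h2 : L ^ j / j.factorial ≤ (1 - δ) * (L ^ (j+1) / (j+1).factorial) := by
      have e : L ^ j / j.factorial = ((j + 1) / L) * (L ^ (j+1) / (j+1).factorial) := by
        rw [Nat.factorial_succ]; push_cast
        have : (j.factorial : ℝ) ≠ 0 := by positivity
        field_simp
        ring
      rw [e]
      have : ((j : ℝ) + 1) / L ≤ 1 - δ := by rwa [div_le_iff₀ hL]
      gcongr
    have h3 : 1 / δ * (L ^ j / j.factorial) ≤ 1 / δ * ((1 - δ) * (L ^ (j+1) / (j+1).factorial)) := by
      gcongr
    have e : 1 / δ * ((1 - δ) * (L ^ (j+1) / (j+1).factorial)) + L ^ (j+1) / (j+1).factorial =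
      1 / δ * (L ^ (j+1) / (j+1).factorial) := by field_simp; ring
    linarith

lemma shift_pow (L B : ℝ) (hL : 0 < L) (hB : 0 ≤ B) (k : ℕ) (hk : (k : ℝ) ≤ L) :
    (L + B) ^ k ≤ Real.exp B * L ^ k := by
  have h1 : L + B ≤ L * Real.exp (B / L) := by
    have := Real.add_one_le_exp (B / L)
    calc L + B = L * (B / L + 1) := by field_simp; ring
      _ ≤ _ := by gcongr
  calc (L + B) ^ k ≤ (L * Real.exp (B / L)) ^ k := by gcongr
    _ = Real.exp (k * (B / L)) * L ^ k := by rw [mul_pow, ← Real.exp_nat_mul]; ring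
    _ ≤ _ := by
      gcongr
      calc (k : ℝ) * (B / L) ≤ L * (B / L) := by gcongr
        _ = B := by field_simp

/-- For every `δ > 0` there is a constant `C` such that for all sufficiently large `x` and
every integer `i` with `1 ≤ i ≤ (1 - δ) log log x`, the number of positive integers `n ≤ x`
with `Ω(n) ≤ i` is less than `C · (x / log x) · (log log x)^{i-1} / (i-1)!`. -/
theorem count_small_Omega_lt :
    ∀ δ : ℝ, 0 < δ → ∃ C : ℝ, ∃ X : ℝ, ∀ x : ℝ, X ≤ x →
      ∀ i : ℕ, 1 ≤ i → (i : ℝ) ≤ (1 - δ) * Real.log (Real.log x) →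
      (((Finset.Icc 1 ⌊x⌋₊).filter fun n => n.primeFactorsList.length ≤ i).card : ℝ) <
        C * (x / Real.log x) *
          (Real.log (Real.log x) ^ (i - 1) / (Nat.factorial (i - 1) : ℝ)) := by
  intro δ hδ
  obtain ⟨B, hB, hM⟩ := mertens_two
  obtain ⟨Z, hZ⟩ : ∃ Z, Z = ∑' b : ℕ, (1 : ℝ) / (b : ℝ) ^ 2 := ⟨_, rfl⟩
  have hZ0 : 0 ≤ Z := by rw [hZ]; exact tsum_nonneg fun _ => by positivity
  have h4 : 0 < Real.log 4 := Real.log_pos (by norm_num)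
  refine ⟨(2 + 2 * (Real.log 4 + 4) * Z) * (Real.exp B * (1 / δ)) + 1, Real.exp (Real.exp 1), ?_⟩
  intro x hx i hi hiL
  have hx3 : 3 ≤ x := by
    have := Real.add_one_le_exp (Real.exp 1)
    have := Real.add_one_le_exp 1
    linarith
  have hx0 : 0 < x := by linarith
  have hlog : Real.exp 1 ≤ Real.log x := (Real.le_log_iff_exp_le hx0).2 hx
  have hlog0 : 0 < Real.log x := (Real.exp_pos 1).trans_le hlog
  have hL1 : 1 ≤ Real.log (Real.log x) := (Real.le_log_iff_exp_le hlog0).2 hlog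
  set L := Real.log (Real.log x) with hLdef
  have hL0 : 0 < L := by linarith
  obtain ⟨j, rfl⟩ : ∃ j, i = j + 1 := ⟨i - 1, by omega⟩
  have hls := log_sum x hx0.le (j+1) hi
  have has := all_sum ⌊x⌋₊ j
  simp only [Nat.add_sub_cancel] at hls ⊢
  rw [← hZ] at has
  push_cast at hiL
  have hjL : (j : ℝ) ≤ (1 - δ) * L := by linarith
  have hjL' : (j : ℝ) ≤ L := by nlinarith
  have hN2 : 2 ≤ ⌊x⌋₊ := Nat.le_floor (by push_cast; linarith)
  have hP := hM ⌊x⌋₊ hN2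
  have hPL : ∑ p ∈ Ioc 0 ⌊x⌋₊ with p.Prime, (1 : ℝ) / p ≤ L + B := by
    refine hP.trans ?_
    have hN2' : (2 : ℝ) ≤ ⌊x⌋₊ := by exact_mod_cast hN2
    have : 0 < Real.log ⌊x⌋₊ := Real.log_pos (by linarith)
    have : Real.log ⌊x⌋₊ ≤ Real.log x := Real.log_le_log (by linarith) (Nat.floor_le hx0.le)
    have := Real.log_le_log (by assumption) this
    linarith
  set P := ∑ p ∈ Ioc 0 ⌊x⌋₊ with p.Prime, (1 : ℝ) / p with hPdef
  have hP0 : 0 ≤ P := Finset.sum_nonneg fun _ _ => by positivity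
  set T := ∑ k ∈ range (j + 1), P ^ k / k.factorial with hT
  have hT1 : 1 ≤ T := by
    have := Finset.single_le_sum (f := fun k : ℕ => P ^ k / (k.factorial : ℝ)) (s := range (j+1)) (a := 0)
      (fun _ _ => by positivity) (by simp)
    simpa using this
  have hTb : T ≤ Real.exp B * (1 / δ) * (L ^ j / j.factorial) := by
    calc T ≤ ∑ k ∈ range (j + 1), Real.exp B * (L ^ k / k.factorial) := by
          apply Finset.sum_le_sum
          intro k hk
          have hkj : (k : ℝ) ≤ j := by
            have := mem_range.1 hk
            exact_mod_cast (by omega : k ≤ j)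
          rw [← mul_div_assoc]
          gcongr
          calc P ^ k ≤ (L + B) ^ k := by gcongr
            _ ≤ _ := shift_pow L B hL0 hB k (by linarith)
      _ = Real.exp B * ∑ k ∈ range (j + 1), L ^ k / k.factorial := by rw [Finset.mul_sum]
      _ ≤ Real.exp B * (1 / δ * (L ^ j / j.factorial)) := by
          gcongr
          exact exp_partial δ L hδ hL0 j hjL
      _ = _ := by ring
  have hcard : (((Finset.Icc 1 ⌊x⌋₊).filter fun n => n.primeFactorsList.length ≤ j + 1).card : ℝ) ≤
      Real.sqrt x + 2 / Real.log x *
        ∑ n ∈ Icc 1 ⌊x⌋₊ with n.primeFactorsList.length ≤ j + 1, Real.log n := by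
    set S := (Finset.Icc 1 ⌊x⌋₊).filter fun n => n.primeFactorsList.length ≤ j + 1
    have hA : (((S.filter fun n : ℕ => (n : ℝ) ≤ Real.sqrt x).card : ℕ) : ℝ) ≤ Real.sqrt x := by
      have hsub : (S.filter fun n : ℕ => (n : ℝ) ≤ Real.sqrt x) ⊆ Icc 1 ⌊Real.sqrt x⌋₊ := by
        intro n hn
        simp only [S, mem_filter, mem_Icc] at hn ⊢
        exact ⟨hn.1.1.1, Nat.le_floor hn.2⟩
      have := Finset.card_le_card hsub
      rw [Nat.card_Icc, Nat.add_sub_cancel] at this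
      calc (((S.filter fun n : ℕ => (n : ℝ) ≤ Real.sqrt x).card : ℕ) : ℝ) ≤ (⌊Real.sqrt x⌋₊ : ℝ) := by
            exact_mod_cast this
        _ ≤ _ := Nat.floor_le (Real.sqrt_nonneg x)
    have hBd : (S.card : ℝ) ≤ ∑ n ∈ S, ((if (n : ℝ) ≤ Real.sqrt x then 1 else 0) +
        2 / Real.log x * Real.log n) := by
      rw [Finset.card_eq_sum_ones]
      push_cast
      apply Finset.sum_le_sum
      intro n hn
      have hln : 0 ≤ 2 / Real.log x * Real.log n :=
        mul_nonneg (by positivity) (Real.log_natCast_nonneg n)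
      split_ifs with h
      · linarith
      · push Not at h
        have h5 := Real.log_le_log (Real.sqrt_pos.2 hx0) h.le
        rw [Real.log_sqrt hx0.le] at h5
        have : 2 / Real.log x * (Real.log x / 2) ≤ 2 / Real.log x * Real.log n := by gcongr
        have e : 2 / Real.log x * (Real.log x / 2) = 1 := by field_simp
        linarith
    rw [Finset.sum_add_distrib, ← Finset.mul_sum, Finset.sum_boole] at hBd
    linarith
  have hsq : Real.sqrt x ≤ 2 * (x / Real.log x) := by
    have h5 : Real.log x ≤ 2 * Real.sqrt x := by
      have := Real.log_le_self (Real.sqrt_nonneg x)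
      rw [Real.log_sqrt hx0.le] at this
      linarith
    rw [← mul_div_assoc, le_div_iff₀ hlog0]
    have h6 := Real.mul_self_sqrt hx0.le
    nlinarith [Real.sqrt_nonneg x]
  have hQ : 0 < x / Real.log x := by positivity
  have hls2 : 2 / Real.log x *
        ∑ n ∈ Icc 1 ⌊x⌋₊ with n.primeFactorsList.length ≤ j + 1, Real.log n ≤
        2 * (Real.log 4 + 4) * Z * (x / Real.log x) * T := by
    calc _ ≤ 2 / Real.log x * ((Real.log 4 + 4) * x * (Z * T)) := by
          gcongr
          refine hls.trans ?_
          gcongr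
      _ = _ := by ring
  set Q := x / Real.log x
  have hU : 0 < L ^ j / (j.factorial : ℝ) := by positivity
  set U := L ^ j / (j.factorial : ℝ)
  set K := 2 * (Real.log 4 + 4) * Z with hK
  have hK0 : 0 ≤ K := by positivity
  calc _ ≤ 2 * Q * 1 + K * Q * T := by linarith
    _ ≤ 2 * Q * T + K * Q * T := by gcongr
    _ = (2 + K) * Q * T := by ring
    _ ≤ (2 + K) * Q * (Real.exp B * (1 / δ) * U) := by gcongr
    _ < (2 + K) * Q * (Real.exp B * (1 / δ) * U) + Q * U := by
      have := mul_pos hQ hU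
      linarith
    _ = _ := by ring
end

section
/- For every δ > 0 there exists a constant C = C(δ) such that for all sufficiently large real x and every integer i with (1 + δ) log log x ≤ i ≤ (2 − δ) log log x, the number M_i(x) of positive integers n ≤ x with Ω(n) ≥ i satisfies M_i(x) < C · (x / log x) · (log log x)^{i−1} / (i−1)!. -/
open Finset

lemma aux_rad_log_le (n : ℕ) (hn : n ≠ 0) : ∑ p ∈ n.primeFactors, Real.log p ≤ Real.log n := by
  rw [← Real.log_prod (fun p hp => by
    have := (Nat.prime_of_mem_primeFactors hp).pos
    positivity), ← Nat.cast_prod]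
  apply Real.log_le_log
  · exact_mod_cast Finset.prod_pos fun p hp => (Nat.prime_of_mem_primeFactors hp).pos
  · exact_mod_cast Nat.le_of_dvd (Nat.pos_of_ne_zero hn) (Nat.prod_primeFactors_dvd n)

lemma aux_theta (N : ℕ) : ∑ p ∈ (Icc 1 N).filter Nat.Prime, Real.log p ≤ Real.log 4 * N := by
  have := Chebyshev.theta_le_log4_mul_x (x := N) (by positivity)
  rw [Chebyshev.theta_eq_sum_Icc] at this
  refine le_trans (Finset.sum_le_sum_of_subset_of_nonneg ?_ ?_) this
  · intro p hp
    simp at hp ⊢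
    exact ⟨hp.1.2, hp.2⟩
  · intro p hp _
    simp at hp
    exact Real.log_nonneg (by exact_mod_cast hp.2.one_lt.le)

lemma aux_A (N : ℕ) (hN : 1 ≤ N) :
    ∑ p ∈ (Icc 1 N).filter Nat.Prime, Real.log p / p ≤ Real.log N + Real.log 4 := by
  have h1 : ∑ n ∈ Icc 1 N, ∑ p ∈ n.primeFactors, Real.log p ≤ N * Real.log N := by
    calc _ ≤ ∑ n ∈ Icc 1 N, Real.log N := by
          apply Finset.sum_le_sum
          intro n hn
          simp at hn
          refine (aux_rad_log_le n (by omega)).trans ?_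
          apply Real.log_le_log
          · exact_mod_cast hn.1
          · exact_mod_cast hn.2
      _ = _ := by simp
  have h2 : ∑ n ∈ Icc 1 N, ∑ p ∈ n.primeFactors, Real.log p
      = ∑ p ∈ (Icc 1 N).filter Nat.Prime, ∑ n ∈ (Icc 1 N).filter (fun n => p ∣ n), Real.log p := by
    apply Finset.sum_comm'
    intro n p
    simp only [mem_Icc, Nat.mem_primeFactors, mem_filter]
    constructor
    · rintro ⟨h, hp, hd, h0⟩
      exact ⟨⟨h, hd⟩, ⟨hp.one_lt.le, (Nat.le_of_dvd (by omega) hd).trans h.2⟩, hp⟩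
    · rintro ⟨⟨h, hd⟩, h3, hp⟩
      exact ⟨h, hp, hd, by omega⟩
  have h3 : ∀ p ∈ (Icc 1 N).filter Nat.Prime, N * (Real.log p / p) - Real.log p ≤
      ∑ n ∈ (Icc 1 N).filter (fun n => p ∣ n), Real.log p := by
    intro p hp
    simp at hp
    have hc : ((Icc 1 N).filter (fun n => p ∣ n)).card = N / p := by
      have := Nat.Ioc_filter_dvd_card_eq_div N p
      rw [← this]; congr 1
    rw [Finset.sum_const, hc, nsmul_eq_mul]
    have hl : 0 ≤ Real.log p := Real.log_nonneg (by exact_mod_cast hp.1.1)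
    have : (N : ℝ) / p - 1 ≤ ((N / p : ℕ) : ℝ) := by
      have := Nat.lt_floor_add_one ((N : ℝ) / p)
      rw [Nat.floor_div_natCast, Nat.floor_natCast] at this
      linarith
    calc _ = ((N : ℝ) / p - 1) * Real.log p := by ring
      _ ≤ _ := by gcongr
  have h4 := Finset.sum_le_sum h3
  rw [Finset.sum_sub_distrib, ← Finset.mul_sum, ← h2] at h4
  have h5 := aux_theta N
  have hN' : (0 : ℝ) < N := by exact_mod_cast hN
  have : (N : ℝ) * ∑ p ∈ (Icc 1 N).filter Nat.Prime, Real.log p / p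
     ≤ N * (Real.log N + Real.log 4) := by linarith
  exact le_of_mul_le_mul_left this hN'

lemma aux_B : ∃ c : ℝ, 0 ≤ c ∧ ∀ N : ℕ, 2 ≤ N →
    ∑ p ∈ (Icc 1 N).filter Nat.Prime, 1 / (p : ℝ) ≤ Real.log (Real.log N) + c := by
  set c := Real.log 4 with hc
  have hc0 : 0 < c := Real.log_pos (by norm_num)
  have l2 : 0 < Real.log 2 := Real.log_pos (by norm_num)
  have key : ∀ N : ℕ, 2 ≤ N →
      ∑ p ∈ (Icc 1 N).filter Nat.Prime, 1 / (p : ℝ)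
        - (∑ p ∈ (Icc 1 N).filter Nat.Prime, Real.log p / p) / Real.log N ≤
      Real.log (Real.log N) - Real.log (Real.log 2) + c * (1 / Real.log 2 - 1 / Real.log N) := by
    intro N hN
    induction N, hN using Nat.le_induction with
    | base =>
      have : (Icc 1 2).filter Nat.Prime = {2} := by decide
      rw [this]
      simp
      field_simp
      simp
    | succ N hN ih =>
      have hlN : 0 < Real.log N := Real.log_pos (by exact_mod_cast hN)
      have hlt : Real.log N ≤ Real.log (N + 1 : ℕ) := by
        apply Real.log_le_log (by positivity)
        push_cast
        linarith
      have hlN1 : 0 < Real.log (N + 1 : ℕ) := by linarith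
      have hA := aux_A N (by omega)
      set A := ∑ p ∈ (Icc 1 N).filter Nat.Prime, Real.log p / p with hAdef
      set P := ∑ p ∈ (Icc 1 N).filter Nat.Prime, 1 / (p : ℝ) with hPdef
      have step : ∑ p ∈ (Icc 1 (N+1)).filter Nat.Prime, 1 / (p : ℝ)
        - (∑ p ∈ (Icc 1 (N+1)).filter Nat.Prime, Real.log p / p) / Real.log (N + 1 : ℕ)
        = P - A / Real.log (N + 1 : ℕ) := by
        rw [Finset.sum_filter, Finset.sum_filter, Finset.sum_Icc_succ_top (by omega),
          Finset.sum_Icc_succ_top (by omega), ← Finset.sum_filter, ← Finset.sum_filter,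
          ← hAdef, ← hPdef]
        split_ifs
        · field_simp
          ring
        · ring
      rw [step]
      have h6 : Real.log (Real.log (N + 1 : ℕ)) - Real.log (Real.log N) ≥
          1 - Real.log N / Real.log (N + 1 : ℕ) := by
        have := Real.log_le_sub_one_of_pos (x := Real.log N / Real.log (N + 1 : ℕ)) (by positivity)
        rw [Real.log_div hlN.ne' hlN1.ne'] at this
        linarith
      have h7 : A * (1 / Real.log N - 1 / Real.log (N + 1 : ℕ)) ≤
          (Real.log N + c) * (1 / Real.log N - 1 / Real.log (N + 1 : ℕ)) := by
        apply mul_le_mul_of_nonneg_right hA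
        rw [sub_nonneg]
        exact one_div_le_one_div_of_le hlN hlt
      have h8 : (Real.log N + c) * (1 / Real.log N - 1 / Real.log (N + 1 : ℕ)) =
         1 - Real.log N / Real.log (N + 1 : ℕ) + c * (1 / Real.log N - 1 / Real.log (N + 1 : ℕ)) := by
        field_simp
      have h9 : P - A / Real.log (N + 1 : ℕ) = P - A / Real.log N +
        A * (1 / Real.log N - 1 / Real.log (N + 1 : ℕ)) := by ring
      rw [h9]
      linarith
  refine ⟨|1 - Real.log (Real.log 2) + c / Real.log 2|, abs_nonneg _, fun N hN => ?_⟩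
  have h1 := key N hN
  have hlN : 0 < Real.log N := Real.log_pos (by exact_mod_cast hN)
  have h2 : (∑ p ∈ (Icc 1 N).filter Nat.Prime, Real.log p / p) / Real.log N ≤ 1 + c / Real.log N := by
    rw [div_le_iff₀ hlN]
    have := aux_A N (by omega)
    calc _ ≤ _ := this
      _ = _ := by field_simp; rfl
  have h3 := le_abs_self (1 - Real.log (Real.log 2) + c / Real.log 2)
  have h4 : c * (1 / Real.log 2 - 1 / Real.log N) = c / Real.log 2 - c / Real.log N := by ring
  linarith

lemma aux_len {a b : ℕ} (ha : a ≠ 0) (hb : b ≠ 0) : (a * b).primeFactorsList.length =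
    a.primeFactorsList.length + b.primeFactorsList.length := by
  rw [(Nat.perm_primeFactorsList_mul ha hb).length_eq, List.length_append]

lemma aux_len_prime {p : ℕ} (hp : p.Prime) : p.primeFactorsList.length = 1 := by
  rw [Nat.primeFactorsList_prime hp]; rfl

lemma aux_inj {α β : Type*} [DecidableEq β] (A : Finset α) (B : Finset β) (i : α → β)
    (f : α → ℝ) (g : β → ℝ) (hg : ∀ b ∈ B, 0 ≤ g b) (hi : Set.InjOn i A)
    (h : ∀ a ∈ A, i a ∈ B ∧ f a ≤ g (i a)) : ∑ a ∈ A, f a ≤ ∑ b ∈ B, g b := by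
  calc _ ≤ ∑ a ∈ A, g (i a) := Finset.sum_le_sum fun a ha => (h a ha).2
    _ = ∑ b ∈ A.image i, g b := (Finset.sum_image hi).symm
    _ ≤ _ := by
      apply Finset.sum_le_sum_of_subset_of_nonneg
      · intro b hb
        obtain ⟨a, ha, rfl⟩ := Finset.mem_image.1 hb
        exact (h a ha).1
      · intro b hb _
        exact hg b hb

lemma aux_pair (A : Finset ℕ) (B : Finset (ℕ × ℕ)) (g : ℕ × ℕ → ℝ) (f : ℕ → ℕ → ℝ)
    (hg : ∀ b ∈ B, 0 ≤ g b)
    (h : ∀ n ∈ A, ∀ p : ℕ, p.Prime → p ∣ n → (p, n / p) ∈ B ∧ f n p ≤ g (p, n / p)) :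
    ∑ n ∈ A, ∑ p ∈ n.primeFactors, f n p ≤ ∑ b ∈ B, g b := by
  rw [Finset.sum_sigma']
  refine aux_inj _ _ (fun a => (a.2, a.1 / a.2)) _ _ hg ?_ ?_
  · rintro ⟨n, p⟩ h1 ⟨m, q⟩ h2 h3
    simp only [coe_sigma, Set.mem_sigma_iff, mem_coe, Nat.mem_primeFactors] at h1 h2
    simp only [Prod.mk.injEq] at h3
    obtain ⟨rfl, h3⟩ := h3
    have e1 := Nat.div_mul_cancel h1.2.2.1
    have e2 := Nat.div_mul_cancel h2.2.2.1
    rw [h3] at e1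
    have : n = m := e1.symm.trans e2
    subst this; rfl
  · rintro ⟨n, p⟩ h1
    simp only [mem_sigma, Nat.mem_primeFactors] at h1
    exact h n h1.1 p h1.2.1 h1.2.2.1

lemma aux_S (N j : ℕ) :
    ∑ s ∈ (Icc 1 N).filter (fun s => Squarefree s ∧ s.primeFactorsList.length = j), 1 / (s : ℝ) ≤
      (∑ p ∈ (Icc 1 N).filter Nat.Prime, 1 / (p : ℝ)) ^ j / (j.factorial : ℝ) := by
  set P := ∑ p ∈ (Icc 1 N).filter Nat.Prime, 1 / (p : ℝ) with hP
  have hP0 : 0 ≤ P := Finset.sum_nonneg fun _ _ => by positivity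
  induction j with
  | zero =>
    have : (Icc 1 N).filter (fun s => Squarefree s ∧ s.primeFactorsList.length = 0) ⊆ {1} := by
      intro s hs
      simp at hs
      simp; omega
    refine (Finset.sum_le_sum_of_subset_of_nonneg this (fun _ _ _ => by positivity)).trans ?_
    simp
  | succ j ih =>
    set S := (Icc 1 N).filter (fun s => Squarefree s ∧ s.primeFactorsList.length = j + 1) with hS
    set S' := (Icc 1 N).filter (fun s => Squarefree s ∧ s.primeFactorsList.length = j) with hS'
    have h1 : (j + 1 : ℝ) * ∑ s ∈ S, 1 / (s : ℝ) = ∑ s ∈ S, ∑ p ∈ s.primeFactors, 1 / (s : ℝ) := by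
      rw [Finset.mul_sum]
      apply Finset.sum_congr rfl
      intro s hs
      rw [hS] at hs
      simp only [mem_filter] at hs
      have : s.primeFactors.card = j + 1 := by
        rw [← hs.2.2, Nat.primeFactors, List.toFinset_card_of_nodup]
        exact (Nat.squarefree_iff_nodup_primeFactorsList (by intro h; simp [h] at hs)).1 hs.2.1
      rw [Finset.sum_const, this, nsmul_eq_mul]
      push_cast; rfl
    have h2 : ∑ s ∈ S, ∑ p ∈ s.primeFactors, 1 / (s : ℝ) ≤
        ∑ q ∈ ((Icc 1 N).filter Nat.Prime) ×ˢ S', 1 / (q.1 : ℝ) * (1 / (q.2 : ℝ)) := by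
      apply aux_pair S _ (fun q : ℕ × ℕ => 1 / (q.1 : ℝ) * (1 / (q.2 : ℝ))) (fun s _ => 1 / (s : ℝ))
      · intro q _; positivity
      · intro n hn p hp hd
        simp only [hS, mem_filter, mem_Icc] at hn
        obtain ⟨m, rfl⟩ := hd
        have hm : m ≠ 0 := by rintro rfl; simp at hn
        rw [Nat.mul_div_cancel_left m hp.pos]
        have hl := aux_len hp.ne_zero hm
        rw [aux_len_prime hp] at hl
        refine ⟨?_, ?_⟩
        · simp only [hS', mem_product, mem_filter, mem_Icc]
          refine ⟨⟨⟨hp.one_lt.le, ?_⟩, hp⟩, ⟨Nat.pos_of_ne_zero hm, ?_⟩,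
            hn.2.1.squarefree_of_dvd (Dvd.intro_left p rfl), by omega⟩
          · exact (Nat.le_mul_of_pos_right p (Nat.pos_of_ne_zero hm)).trans hn.1.2
          · exact (Nat.le_mul_of_pos_left m hp.pos).trans hn.1.2
        · push_cast
          rw [one_div_mul_one_div]
    have h3 : ∑ q ∈ ((Icc 1 N).filter Nat.Prime) ×ˢ S', 1 / (q.1 : ℝ) * (1 / (q.2 : ℝ)) =
        P * ∑ s ∈ S', 1 / (s : ℝ) := by
      rw [Finset.sum_mul_sum, Finset.sum_product]
    have h4 : (j + 1 : ℝ) * ∑ s ∈ S, 1 / (s : ℝ) ≤ P * (P ^ j / (j.factorial : ℝ)) := by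
      rw [h1]; refine h2.trans ?_; rw [h3]; gcongr
    rw [Nat.factorial_succ]
    push_cast
    rw [le_div_iff₀ (by positivity)]
    calc _ = ((j + 1 : ℝ) * ∑ s ∈ S, 1 / (s : ℝ)) * (j.factorial : ℝ) := by ring
      _ ≤ P * (P ^ j / (j.factorial : ℝ)) * (j.factorial : ℝ) := by gcongr
      _ = _ := by field_simp; ring

lemma aux_cnt (N i : ℕ) :
    ∑ n ∈ (Icc 1 N).filter (fun n => i ≤ n.primeFactorsList.length),
      ∑ p ∈ n.primeFactors, Real.log p ≤
    Real.log 4 * N * ∑ m ∈ (Icc 1 N).filter (fun m => i - 1 ≤ m.primeFactorsList.length),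
      1 / (m : ℝ) := by
  set A := (Icc 1 N).filter (fun m => i - 1 ≤ m.primeFactorsList.length) with hA
  have h1 : ∑ n ∈ (Icc 1 N).filter (fun n => i ≤ n.primeFactorsList.length),
      ∑ p ∈ n.primeFactors, Real.log p ≤
      ∑ q ∈ (((Icc 1 N).filter Nat.Prime) ×ˢ A).filter (fun q => q.1 * q.2 ≤ N),
        Real.log (q.1 : ℝ) := by
    apply aux_pair _ _ (fun q : ℕ × ℕ => Real.log (q.1 : ℝ)) (fun _ p => Real.log p)
    · intro q hq
      simp only [mem_filter, mem_product, mem_Icc] at hq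
      exact Real.log_nonneg (by exact_mod_cast hq.1.1.1.1)
    · intro n hn p hp hd
      simp only [mem_filter, mem_Icc] at hn
      obtain ⟨m, rfl⟩ := hd
      have hm : m ≠ 0 := by rintro rfl; simp at hn
      rw [Nat.mul_div_cancel_left m hp.pos]
      have hl := aux_len hp.ne_zero hm
      rw [aux_len_prime hp] at hl
      refine ⟨?_, le_rfl⟩
      simp only [hA, mem_product, mem_filter, mem_Icc]
      refine ⟨⟨⟨⟨hp.one_lt.le, ?_⟩, hp⟩, ⟨Nat.pos_of_ne_zero hm, ?_⟩, by omega⟩, hn.1.2⟩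
      · exact (Nat.le_mul_of_pos_right p (Nat.pos_of_ne_zero hm)).trans hn.1.2
      · exact (Nat.le_mul_of_pos_left m hp.pos).trans hn.1.2
  refine h1.trans ?_
  rw [Finset.sum_filter, Finset.sum_product_right, Finset.mul_sum]
  apply Finset.sum_le_sum
  intro m hm
  simp only [hA, mem_filter, mem_Icc] at hm
  rw [← Finset.sum_filter, Finset.filter_filter]
  have h2 : (Icc 1 N).filter (fun p => Nat.Prime p ∧ p * m ≤ N) ⊆
      (Icc 1 (N / m)).filter Nat.Prime := by
    intro p hp
    simp only [mem_filter, mem_Icc] at hp ⊢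
    exact ⟨⟨hp.1.1, (Nat.le_div_iff_mul_le (by omega)).2 hp.2.2⟩, hp.2.1⟩
  refine (Finset.sum_le_sum_of_subset_of_nonneg h2 ?_).trans ((aux_theta _).trans ?_)
  · intro p hp _
    simp only [mem_filter, mem_Icc] at hp
    exact Real.log_nonneg (by exact_mod_cast hp.1.1)
  · rw [mul_assoc, mul_one_div]
    have : 0 ≤ Real.log 4 := Real.log_nonneg (by norm_num)
    gcongr
    exact Nat.cast_div_le

lemma aux_t (t : ℝ) (h : 1 - t ≠ 0) : (1 - t)⁻¹ = (1 - t)⁻¹ * t + 1 := by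
  field_simp
  ring

lemma aux_K (Y : ℝ) (hY : 0 ≤ Y) (hY2 : Y < 2) : ∃ K : ℝ, 0 ≤ K ∧ ∀ N : ℕ,
    ∑ b ∈ Icc 1 N, Y ^ (2 * b.primeFactorsList.length) / (b : ℝ) ^ 2 ≤ K := by
  set f : ℕ → ℝ := fun b => if b = 0 then 0 else Y ^ (2 * b.primeFactorsList.length) / (b : ℝ) ^ 2
    with hf
  have f0 : ∀ b, 0 ≤ f b := by intro b; simp only [hf]; split_ifs <;> positivity
  have f1 : f 1 = 1 := by simp [hf]
  have fm : ∀ m n : ℕ, f (m * n) = f m * f n := by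
    intro m n
    simp only [hf]
    by_cases hm : m = 0
    · simp [hm]
    by_cases hn : n = 0
    · simp [hn]
    simp only [hm, hn, mul_eq_zero, or_self, if_false]
    rw [aux_len hm hn, mul_add, pow_add]
    push_cast
    field_simp
  have fpow : ∀ p n : ℕ, f (p ^ n) = f p ^ n := by
    intro p n
    induction n with
    | zero => simpa using f1
    | succ n ih => rw [pow_succ, fm, ih, pow_succ]
  have fp : ∀ p : ℕ, p.Prime → f p = Y ^ 2 / (p : ℝ) ^ 2 := by
    intro p hp
    simp only [hf, hp.ne_zero, if_false, aux_len_prime hp]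
  have fp1 : ∀ p : ℕ, p.Prime → f p ≤ Y ^ 2 / 4 := by
    intro p hp
    rw [fp p hp]
    have : (2 : ℝ) ≤ p := by exact_mod_cast hp.two_le
    gcongr
    nlinarith
  have hY4 : Y ^ 2 / 4 < 1 := by nlinarith
  have hs : ∀ {p : ℕ}, Nat.Prime p → Summable fun n => ‖f (p ^ n)‖ := by
    intro p hp
    simp_rw [fpow, Real.norm_eq_abs, abs_of_nonneg (pow_nonneg (f0 p) _)]
    exact summable_geometric_of_lt_one (f0 p) ((fp1 p hp).trans_lt hY4)
  set D := (1 - Y ^ 2 / 4)⁻¹ with hD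
  have hD0 : 0 < D := by rw [hD]; apply inv_pos.2; linarith
  have hsum2 : Summable fun n : ℕ => 1 / (n : ℝ) ^ 2 := Real.summable_one_div_nat_pow.2 (by norm_num)
  refine ⟨Real.exp (D * Y ^ 2 * ∑' n : ℕ, 1 / (n : ℝ) ^ 2), by positivity, fun N => ?_⟩
  obtain ⟨h1, h2⟩ := EulerProduct.summable_and_hasSum_smoothNumbers_prod_primesBelow_tsum f1
    (fun {m n} _ => fm m n) hs (N + 1)
  have h3 : ∑ b ∈ Icc 1 N, Y ^ (2 * b.primeFactorsList.length) / (b : ℝ) ^ 2 ≤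
      ∏ p ∈ (N + 1).primesBelow, ∑' (n : ℕ), f (p ^ n) := by
    have e : ∑ b ∈ Icc 1 N, Y ^ (2 * b.primeFactorsList.length) / (b : ℝ) ^ 2 =
        ∑ b ∈ (Icc 1 N).attach, f b.1 := by
      rw [Finset.sum_attach (Icc 1 N) f]
      apply Finset.sum_congr rfl
      intro b hb
      simp only [mem_Icc] at hb
      simp only [hf]
      rw [if_neg (by omega)]
    rw [e]
    have := sum_le_hasSum ((Icc 1 N).attach.map ⟨fun b => (⟨b.1, Nat.mem_smoothNumbers_of_lt
      (by have := mem_Icc.1 b.2; omega) (by have := mem_Icc.1 b.2; omega)⟩ :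
        (N + 1).smoothNumbers), by
        intro a b hab
        exact Subtype.ext (congrArg (fun z : (N + 1).smoothNumbers => (z : ℕ)) hab)⟩) (fun _ _ => f0 _) h2
    rw [Finset.sum_map] at this
    exact this
  refine h3.trans ?_
  have h4 : ∀ p ∈ (N + 1).primesBelow, ∑' (n : ℕ), f (p ^ n) ≤
      Real.exp (D * Y ^ 2 * (1 / (p : ℝ) ^ 2)) := by
    intro p hp
    have hp := Nat.prime_of_mem_primesBelow hp
    simp_rw [fpow]
    have hlt := (fp1 p hp).trans_lt hY4
    rw [tsum_geometric_of_lt_one (f0 p) hlt]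
    have h5 : (1 - f p)⁻¹ ≤ D * f p + 1 := by
      have : (1 - f p)⁻¹ = (1 - f p)⁻¹ * f p + 1 :=
        aux_t _ (by linarith)
      rw [this]
      have : (1 - f p)⁻¹ ≤ D := by
        rw [hD]
        apply inv_anti₀
        · linarith
        · linarith [fp1 p hp]
      have := f0 p
      gcongr
    refine h5.trans ((Real.add_one_le_exp _).trans (le_of_eq ?_))
    rw [fp p hp]
    congr 1
    ring
  refine (Finset.prod_le_prod (fun p _ => tsum_nonneg fun _ => f0 _) h4).trans ?_
  rw [← Real.exp_sum, ← Finset.mul_sum]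
  apply Real.exp_le_exp.2
  gcongr
  exact hsum2.sum_le_tsum _ (fun _ _ => by positivity)

lemma aux_sq (n : ℕ) (hn : n ≠ 0) : ∃ b s : ℕ, b ^ 2 * s = n ∧ Squarefree s ∧ b ≠ 0 ∧ s ≠ 0 ∧
    n.primeFactorsList.length = s.primeFactorsList.length + 2 * b.primeFactorsList.length := by
  obtain ⟨s, b, h, hs⟩ := Nat.sq_mul_squarefree n
  have hb : b ≠ 0 := by rintro rfl; simp at h; omega
  have hs0 : s ≠ 0 := hs.ne_zero
  refine ⟨b, s, h, hs, hb, hs0, ?_⟩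
  rw [← h, aux_len (by positivity) hs0, pow_two, aux_len hb hb]
  ring

lemma aux_tilt (Q : ℝ) (hQ : 0 < Q) (k j : ℕ) (hk : 0 < k) :
    Q ^ j / (j.factorial : ℝ) ≤ Q ^ k / (k.factorial : ℝ) * ((k / Q) ^ k * (Q / k) ^ j) := by
  have hk' : (0 : ℝ) < k := by exact_mod_cast hk
  have key : (k.factorial : ℝ) * (k : ℝ) ^ j ≤ j.factorial * (k : ℝ) ^ k := by
    rcases le_total j k with h | h
    · obtain ⟨d, rfl⟩ := Nat.exists_eq_add_of_le h
      have h2 : (j + d).factorial ≤ j.factorial * (j + d) ^ d := by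
        rw [← Nat.factorial_mul_ascFactorial]
        exact Nat.mul_le_mul_left _ (Nat.ascFactorial_le_pow_add j d)
      have h3 : ((j + d).factorial : ℝ) ≤ j.factorial * ((j + d : ℕ) : ℝ) ^ d := by exact_mod_cast h2
      calc _ ≤ (j.factorial * ((j + d : ℕ) : ℝ) ^ d) * ((j + d : ℕ) : ℝ) ^ j := by gcongr
        _ = _ := by rw [pow_add]; ring
    · obtain ⟨d, rfl⟩ := Nat.exists_eq_add_of_le h
      have h2 : k.factorial * k ^ d ≤ (k + d).factorial :=
        (Nat.mul_le_mul_left _ (Nat.pow_le_pow_left (Nat.le_succ k) d)).trans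
          Nat.factorial_mul_pow_le_factorial
      have h3 : (k.factorial : ℝ) * (k : ℝ) ^ d ≤ (k + d).factorial := by exact_mod_cast h2
      calc _ = ((k.factorial : ℝ) * (k : ℝ) ^ d) * (k : ℝ) ^ k := by rw [pow_add]; ring
        _ ≤ _ := by gcongr
  rw [div_le_iff₀ (by positivity)]
  have : Q ^ k / (k.factorial : ℝ) * ((k / Q) ^ k * (Q / k) ^ j) * j.factorial
    = Q ^ j * ((j.factorial * (k : ℝ) ^ k) / (k.factorial * (k : ℝ) ^ j)) := by
    rw [div_pow, div_pow]; field_simp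
  rw [this]
  apply le_mul_of_one_le_right (by positivity)
  rw [one_le_div (by positivity)]
  exact key

lemma aux_geom (r : ℝ) (hr : 0 ≤ r) (hr1 : r < 1) (M j0 : ℕ) :
    ∑ j ∈ (range M).filter (fun j => j0 ≤ j), r ^ j ≤ r ^ j0 * (1 - r)⁻¹ := by
  have h1 : ∑ j ∈ (range M).filter (fun j => j0 ≤ j), r ^ j ≤ ∑ d ∈ range M, r ^ j0 * r ^ d := by
    apply aux_inj _ _ (fun j => j - j0)
    · intro b _; positivity
    · intro a ha b hb hab
      simp at ha hb hab
      omega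
    · intro a ha
      simp at ha
      refine ⟨by simp; omega, ?_⟩
      rw [← pow_add, Nat.add_sub_cancel' ha.2]
  refine h1.trans ?_
  rw [← Finset.mul_sum]
  gcongr
  rw [← tsum_geometric_of_lt_one hr hr1]
  exact (summable_geometric_of_lt_one hr hr1).sum_le_tsum _ (fun _ _ => by positivity)

lemma aux_D (N k : ℕ) (Q y0 Y K : ℝ) (hP : ∑ p ∈ (Icc 1 N).filter Nat.Prime, 1 / (p : ℝ) ≤ Q)
    (hQ : 0 < Q) (hk : 0 < k) (hy0 : 1 < y0) (h1 : y0 ≤ k / Q) (h2 : k / Q ≤ Y)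
    (hK : ∑ b ∈ Icc 1 N, Y ^ (2 * b.primeFactorsList.length) / (b : ℝ) ^ 2 ≤ K) :
    ∑ m ∈ (Icc 1 N).filter (fun m => k ≤ m.primeFactorsList.length), 1 / (m : ℝ) ≤
      Q ^ k / (k.factorial : ℝ) * (1 - 1 / y0)⁻¹ * K := by
  have hk' : (0 : ℝ) < k := by exact_mod_cast hk
  have hd : ∀ n : ℕ, ∃ q : ℕ × ℕ, n ≠ 0 → q.1 ^ 2 * q.2 = n ∧ Squarefree q.2 ∧ q.1 ≠ 0 ∧ q.2 ≠ 0 ∧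
    n.primeFactorsList.length = q.2.primeFactorsList.length + 2 * q.1.primeFactorsList.length := by
    intro n
    by_cases hn : n = 0
    · exact ⟨(0, 0), fun h => absurd hn h⟩
    · obtain ⟨b, s, h⟩ := aux_sq n hn
      exact ⟨(b, s), fun _ => h⟩
  choose F hF using hd
  have st1 : ∑ m ∈ (Icc 1 N).filter (fun m => k ≤ m.primeFactorsList.length), 1 / (m : ℝ) ≤
      ∑ q ∈ ((Icc 1 N) ×ˢ (Icc 1 N)).filter (fun q => Squarefree q.2 ∧
        k ≤ q.2.primeFactorsList.length + 2 * q.1.primeFactorsList.length),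
        1 / (q.1 : ℝ) ^ 2 * (1 / (q.2 : ℝ)) := by
    apply aux_inj _ _ F
    · intro q _; positivity
    · intro a ha b hb hab
      simp only [coe_filter, mem_Icc, Set.mem_ofPred_eq] at ha hb
      rw [← (hF a (by omega)).1, ← (hF b (by omega)).1, hab]
    · intro a ha
      simp only [mem_filter, mem_Icc] at ha
      obtain ⟨e1, e2, e3, e4, e5⟩ := hF a (by omega)
      have p1 := Nat.pos_of_ne_zero e3
      have p2 := Nat.pos_of_ne_zero e4
      refine ⟨?_, ?_⟩
      · simp only [mem_filter, mem_product, mem_Icc]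
        refine ⟨⟨⟨p1, ?_⟩, p2, ?_⟩, e2, by omega⟩
        · refine le_trans ?_ ha.1.2
          refine le_trans ?_ e1.le
          rw [pow_two, mul_assoc]
          exact Nat.le_mul_of_pos_right _ (Nat.mul_pos p1 p2)
        · refine le_trans ?_ ha.1.2
          refine le_trans ?_ e1.le
          exact Nat.le_mul_of_pos_left _ (pow_pos p1 2)
      · rw [one_div_mul_one_div]
        apply le_of_eq
        congr 1
        exact_mod_cast e1.symm
  refine st1.trans ?_
  rw [Finset.sum_filter, Finset.sum_product]
  set y := (k : ℝ) / Q with hy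
  have hy1 : 1 < y := by linarith
  have inner : ∀ b ∈ Icc 1 N, (∑ s ∈ Icc 1 N, if Squarefree s ∧
        k ≤ s.primeFactorsList.length + 2 * b.primeFactorsList.length then
        1 / (b : ℝ) ^ 2 * (1 / (s : ℝ)) else 0) ≤
      Q ^ k / (k.factorial : ℝ) * (1 - 1 / y0)⁻¹ *
        (Y ^ (2 * b.primeFactorsList.length) / (b : ℝ) ^ 2) := by
    intro b hb
    rw [← Finset.sum_filter, ← Finset.mul_sum]
    set h := b.primeFactorsList.length with hh
    set M := (Icc 1 N).sup (fun s : ℕ => s.primeFactorsList.length) with hM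
    have i1 : ∑ s ∈ (Icc 1 N).filter (fun s => Squarefree s ∧ k ≤ s.primeFactorsList.length + 2 * h),
        1 / (s : ℝ) ≤ ∑ j ∈ (range (M + 1)).filter (fun j => k - 2 * h ≤ j),
          Q ^ j / (j.factorial : ℝ) := by
      rw [← Finset.sum_fiberwise_of_maps_to (s := (Icc 1 N).filter (fun s => Squarefree s ∧
        k ≤ s.primeFactorsList.length + 2 * h)) (t := (range (M + 1)).filter (fun j => k - 2 * h ≤ j))
        (g := fun s => s.primeFactorsList.length)]
      · apply Finset.sum_le_sum
        intro j hj
        refine le_trans (Finset.sum_le_sum_of_subset_of_nonneg (t := (Icc 1 N).filter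
          (fun s => Squarefree s ∧ s.primeFactorsList.length = j)) ?_ ?_) ((aux_S N j).trans ?_)
        · intro s hs
          simp only [mem_filter] at hs ⊢
          exact ⟨hs.1.1, hs.1.2.1, hs.2⟩
        · intro _ _ _; positivity
        · have : 0 ≤ ∑ p ∈ (Icc 1 N).filter Nat.Prime, 1 / (p : ℝ) :=
            Finset.sum_nonneg fun _ _ => by positivity
          gcongr
      · intro s hs
        simp only [mem_filter, mem_range] at hs ⊢
        have : s.primeFactorsList.length ≤ M :=
          Finset.le_sup (f := fun s : ℕ => s.primeFactorsList.length) hs.1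
        omega
    have i2 : ∑ j ∈ (range (M + 1)).filter (fun j => k - 2 * h ≤ j), Q ^ j / (j.factorial : ℝ) ≤
        Q ^ k / (k.factorial : ℝ) * (y ^ k * ((1 / y) ^ (k - 2 * h) * (1 - 1 / y)⁻¹)) := by
      calc _ ≤ ∑ j ∈ (range (M + 1)).filter (fun j => k - 2 * h ≤ j),
            Q ^ k / (k.factorial : ℝ) * (y ^ k * (1 / y) ^ j) := by
            apply Finset.sum_le_sum
            intro j _
            have := aux_tilt Q hQ k j hk
            rwa [← hy, ← one_div_div (k : ℝ) Q, ← hy] at this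
        _ ≤ _ := by
            rw [← Finset.mul_sum, ← Finset.mul_sum]
            gcongr
            apply aux_geom _ (by positivity)
            rw [div_lt_one (by linarith)]; exact hy1
    have i3 : y ^ k * ((1 / y) ^ (k - 2 * h) * (1 - 1 / y)⁻¹) ≤ Y ^ (2 * h) * (1 - 1 / y0)⁻¹ := by
      rw [← mul_assoc]
      have e1 : y ^ k * (1 / y) ^ (k - 2 * h) ≤ Y ^ (2 * h) := by
        calc _ ≤ y ^ (k - 2 * h + 2 * h) * (1 / y) ^ (k - 2 * h) := by
              gcongr
              · exact hy1.le
              · omega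
          _ = y ^ (2 * h) * (y * (1 / y)) ^ (k - 2 * h) := by rw [pow_add, mul_pow]; ring
          _ = y ^ (2 * h) := by rw [mul_one_div_cancel (by linarith)]; simp
          _ ≤ _ := by gcongr
      have e2 : (1 - 1 / y)⁻¹ ≤ (1 - 1 / y0)⁻¹ := by
        have : 1 / y0 < 1 := by rw [div_lt_one (by linarith)]; exact hy0
        apply inv_anti₀ (by linarith)
        have : 1 / y ≤ 1 / y0 := one_div_le_one_div_of_le (by linarith) h1
        linarith
      have e3 : 0 ≤ (1 - 1 / y)⁻¹ := by
        have : 1 / y < 1 := by rw [div_lt_one (by linarith)]; exact hy1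
        apply inv_nonneg.2; linarith
      have : 0 ≤ Y := by linarith
      gcongr
    calc _ ≤ 1 / (b : ℝ) ^ 2 * (Q ^ k / (k.factorial : ℝ) * (Y ^ (2 * h) * (1 - 1 / y0)⁻¹)) := by
          gcongr
          refine i1.trans (i2.trans ?_)
          gcongr
      _ = _ := by ring
  refine (Finset.sum_le_sum inner).trans ?_
  rw [← Finset.mul_sum]
  have : 0 ≤ (1 - 1 / y0)⁻¹ := by
    have : 1 / y0 < 1 := by rw [div_lt_one (by linarith)]; exact hy0
    apply inv_nonneg.2; linarith
  gcongr

/-- exceptional set -/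
lemma aux_E (N M : ℕ) (hM : 0 < M) [DecidablePred fun n : ℕ => ∃ b, M < b ∧ b ^ 2 ∣ n] :
    (((Icc 1 N).filter (fun n => ∃ b, M < b ∧ b ^ 2 ∣ n)).card : ℝ) ≤ N / M := by
  by_cases hMN : N ≤ M
  · have : (Icc 1 N).filter (fun n => ∃ b, M < b ∧ b ^ 2 ∣ n) = ∅ := by
      apply Finset.filter_eq_empty_iff.2
      rintro n hn ⟨b, hb, hd⟩
      simp only [mem_Icc] at hn
      have := Nat.le_of_dvd (by omega) hd
      nlinarith
    rw [this]; simp; positivity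
  have sub : (Icc 1 N).filter (fun n => ∃ b, M < b ∧ b ^ 2 ∣ n) ⊆
      (Ioc M N).biUnion (fun b => (Ioc 0 N).filter (fun n => b ^ 2 ∣ n)) := by
    intro n hn
    simp only [mem_filter, mem_Icc, mem_biUnion, mem_Ioc] at hn ⊢
    obtain ⟨h1, b, hb, hd⟩ := hn
    have := Nat.le_of_dvd (by omega) hd
    exact ⟨b, ⟨hb, by nlinarith⟩, ⟨by omega, h1.2⟩, hd⟩
  have h1 := (Finset.card_le_card sub).trans Finset.card_biUnion_le
  have h2 : (((Icc 1 N).filter (fun n => ∃ b, M < b ∧ b ^ 2 ∣ n)).card : ℝ) ≤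
      ∑ b ∈ Ioc M N, (((Ioc 0 N).filter (fun n => b ^ 2 ∣ n)).card : ℝ) := by exact_mod_cast h1
  refine h2.trans ?_
  calc _ ≤ ∑ b ∈ Ioc M N, (N : ℝ) * ((b : ℝ) ^ 2)⁻¹ := by
        apply Finset.sum_le_sum
        intro b _
        rw [Nat.Ioc_filter_dvd_card_eq_div, ← div_eq_mul_inv]
        have := Nat.cast_div_le (α := ℝ) (m := N) (n := b ^ 2)
        push_cast at this
        exact this
    _ ≤ (N : ℝ) * ((M : ℝ)⁻¹ - (N : ℝ)⁻¹) := by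
        rw [← Finset.mul_sum]
        gcongr
        exact sum_Ioc_inv_sq_le_sub (by omega) (by omega)
    _ ≤ _ := by
        rw [div_eq_mul_inv]
        gcongr
        simp

/-- For every `δ > 0` there is a constant `C` such that for all sufficiently large `x` and
every integer `i` with `(1 + δ) log log x ≤ i ≤ (2 - δ) log log x`, the number of positive
integers `n ≤ x` with `Ω(n) ≥ i` is less than `C · (x / log x) · (log log x)^{i-1} / (i-1)!`. -/
theorem count_large_Omega_lt :
    ∀ δ : ℝ, 0 < δ → ∃ C : ℝ, ∃ X : ℝ, ∀ x : ℝ, X ≤ x →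
      ∀ i : ℕ, (1 + δ) * Real.log (Real.log x) ≤ (i : ℝ) →
      (i : ℝ) ≤ (2 - δ) * Real.log (Real.log x) →
      (((Finset.Icc 1 ⌊x⌋₊).filter fun n => i ≤ n.primeFactorsList.length).card : ℝ) <
        C * (x / Real.log x) *
          (Real.log (Real.log x) ^ (i - 1) / (Nat.factorial (i - 1) : ℝ)) := by
  classical
  intro δ hδ
  obtain ⟨c, hc0, hB⟩ := aux_B
  obtain ⟨K, hK0, hK⟩ := aux_K (max (2 - δ) 1) (by positivity) (by
    apply max_lt <;> linarith)
  set y0 := 1 + δ / 2 with hy0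
  have hy0' : 1 < y0 := by linarith
  set G := (1 - 1 / y0)⁻¹ with hG
  have hG0 : 0 ≤ G := by
    have : 1 / y0 < 1 := by rw [div_lt_one (by linarith)]; exact hy0'
    apply inv_nonneg.2; linarith
  have tL : Filter.Tendsto (fun x : ℝ => Real.log (Real.log x)) Filter.atTop Filter.atTop :=
    Real.tendsto_log_atTop.comp Real.tendsto_log_atTop
  have ev1 : ∀ᶠ x : ℝ in Filter.atTop, 18 * Real.log (Real.log x) ≤ Real.log x := by
    have h := (Real.isLittleO_log_id_atTop.comp_tendsto Real.tendsto_log_atTop).bound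
      (show (0 : ℝ) < 1 / 18 by norm_num)
    filter_upwards [h, Real.tendsto_log_atTop.eventually_ge_atTop 1,
      tL.eventually_ge_atTop 1] with x hx h1 h2
    simp only [Function.comp, id, Real.norm_eq_abs] at hx
    rw [abs_of_nonneg (by linarith), abs_of_nonneg (by linarith)] at hx
    linarith
  have ev := ev1.and ((tL.eventually_ge_atTop 1).and
    ((tL.eventually_ge_atTop ((1 + (1 + δ / 2) * c) / (δ / 2))).and
    ((Real.tendsto_log_atTop.eventually_ge_atTop 2).and (Filter.eventually_ge_atTop 3))))
  obtain ⟨X, hX⟩ := Filter.eventually_atTop.1 ev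
  refine ⟨4 + 2 * Real.log 4 * (Real.exp (2 * c) * G * K), X, ?_⟩
  intro x hx i hi1 hi2
  obtain ⟨h18, hL1, hLd, hl2, hx3⟩ := hX x hx
  set l := Real.log x with hl
  set L := Real.log l with hL
  set N := ⌊x⌋₊ with hN
  have hx0 : 0 < x := by linarith
  have hNx : (N : ℝ) ≤ x := Nat.floor_le hx0.le
  have hN2 : 2 ≤ N := Nat.le_floor (by norm_num; linarith)
  rw [div_le_iff₀ (by positivity)] at hLd
  have hi : 2 ≤ i := by
    have : (1 : ℝ) < i := by nlinarith
    exact_mod_cast this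
  obtain ⟨k, rfl⟩ : ∃ k, i = k + 1 := ⟨i - 1, by omega⟩
  rw [Nat.add_sub_cancel]
  push_cast at hi1 hi2
  have hk : 0 < k := by omega
  have hk2 : (k : ℝ) ≤ 2 * L := by nlinarith
  set Q := L + c with hQ
  have hQ0 : 0 < Q := by linarith
  have hP : ∑ p ∈ (Icc 1 N).filter Nat.Prime, 1 / (p : ℝ) ≤ Q := by
    refine (hB N hN2).trans ?_
    have hN2' : (1 : ℝ) < N := by exact_mod_cast hN2
    have : Real.log (Real.log N) ≤ L := by
      apply Real.log_le_log (Real.log_pos hN2')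
      exact Real.log_le_log (by linarith) hNx
    linarith
  have hD := aux_D N k Q y0 (max (2 - δ) 1) K hP hQ0 hk hy0' (by
      rw [le_div_iff₀ hQ0]
      nlinarith) (by
      refine le_trans ?_ (le_max_left _ _)
      rw [div_le_iff₀ hQ0]
      have : 0 ≤ 2 - δ := by
        by_contra hcon
        push Not at hcon
        nlinarith
      nlinarith [mul_nonneg this hc0]) (hK N)
  set W := L ^ k / (k.factorial : ℝ) with hW
  have hW0 : 0 < W := by positivity
  have hQW : Q ^ k / (k.factorial : ℝ) ≤ Real.exp (2 * c) * W := by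
    have h1 : Q ≤ L * Real.exp (c / L) := by
      have := Real.add_one_le_exp (c / L)
      calc Q = L * (c / L + 1) := by field_simp; rw [hQ]; ring
        _ ≤ _ := by gcongr
    have h2 : Q ^ k ≤ L ^ k * Real.exp (2 * c) := by
      calc Q ^ k ≤ (L * Real.exp (c / L)) ^ k := by gcongr
        _ = L ^ k * Real.exp (k * (c / L)) := by rw [mul_pow, ← Real.exp_nat_mul]
        _ ≤ _ := by
          apply mul_le_mul_of_nonneg_left _ (by positivity)
          apply Real.exp_le_exp.2
          rw [mul_div_assoc', div_le_iff₀ (by linarith)]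
          nlinarith
    rw [hW]
    calc _ ≤ (L ^ k * Real.exp (2 * c)) / (k.factorial : ℝ) := by gcongr
      _ = _ := by ring
  have hWl : 1 / l ^ 2 ≤ W := by
    have h1 : (k.factorial : ℝ) ≤ (k : ℝ) ^ k := by exact_mod_cast Nat.factorial_le_pow k
    have h2 : (k : ℝ) ^ k ≤ l ^ 2 * L ^ k := by
      calc (k : ℝ) ^ k ≤ (2 * L) ^ k := by gcongr
        _ = 2 ^ k * L ^ k := by rw [mul_pow]
        _ ≤ _ := by
          gcongr
          have e2 : (2 : ℝ) ≤ Real.exp 1 := by linarith [Real.add_one_le_exp (1 : ℝ)]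
          calc (2 : ℝ) ^ k ≤ (Real.exp 1) ^ k := by gcongr
            _ = Real.exp k := by rw [← Real.exp_nat_mul, mul_one]
            _ ≤ Real.exp (2 * L) := Real.exp_le_exp.2 hk2
            _ = l ^ 2 := by
              rw [two_mul, Real.exp_add, hL, Real.exp_log (by linarith)]; ring
    rw [hW, div_le_div_iff₀ (by positivity) (by positivity)]
    linarith
  set S := (Icc 1 N).filter (fun n => k + 1 ≤ n.primeFactorsList.length) with hS
  set M := ⌊l ^ 3⌋₊ with hM
  have hl3 : 8 ≤ l ^ 3 := by
    calc (8 : ℝ) = 2 ^ 3 := by norm_num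
      _ ≤ _ := by gcongr
  have hM1 : l ^ 3 / 2 ≤ M := by
    have := Nat.lt_floor_add_one (l ^ 3)
    rw [← hM] at this
    linarith
  have hM2 : (M : ℝ) ≤ l ^ 3 := Nat.floor_le (by positivity)
  have hM0' : (0 : ℝ) < M := by linarith
  have hM0 : 0 < M := by exact_mod_cast hM0'
  set A1 := Icc 1 ⌊x / l ^ 3⌋₊ with hA1
  set A2 := (Icc 1 N).filter (fun n => ∃ b, M < b ∧ b ^ 2 ∣ n) with hA2
  set A3 := S.filter (fun n : ℕ => l / 2 ≤ ∑ p ∈ n.primeFactors, Real.log (p : ℕ)) with hA3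
  have hsub : S ⊆ A1 ∪ A2 ∪ A3 := by
    intro n hn
    have hn' := hn
    simp only [hS, mem_filter, mem_Icc] at hn'
    simp only [mem_union]
    by_cases h1 : n ∈ A1
    · exact Or.inl (Or.inl h1)
    by_cases h2 : n ∈ A2
    · exact Or.inl (Or.inr h2)
    right
    rw [hA3, mem_filter]
    refine ⟨hn, ?_⟩
    obtain ⟨b, s, e, hs, hb, hs0, -⟩ := aux_sq n (by omega)
    have hbM : b ≤ M := by
      by_contra hcon
      push Not at hcon
      apply h2
      rw [hA2, mem_filter, mem_Icc]
      exact ⟨hn'.1, b, hcon, Dvd.intro s e⟩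
    have hnx : x / l ^ 3 ≤ n := by
      by_contra hcon
      push Not at hcon
      apply h1
      rw [hA1, mem_Icc]
      exact ⟨hn'.1.1, Nat.le_floor hcon.le⟩
    have hlogs : Real.log s ≤ ∑ p ∈ n.primeFactors, Real.log p := by
      have e1 : Real.log s = ∑ p ∈ s.primeFactors, Real.log p := by
        rw [← Real.log_prod (fun p hp => by
          have := (Nat.prime_of_mem_primeFactors hp).pos
          positivity), ← Nat.cast_prod, Nat.prod_primeFactors_of_squarefree hs]
      rw [e1]
      apply Finset.sum_le_sum_of_subset_of_nonneg
      · exact Nat.primeFactors_mono (Dvd.intro_left _ e) (by omega)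
      · intro p hp _
        exact Real.log_nonneg (by exact_mod_cast (Nat.prime_of_mem_primeFactors hp).one_lt.le)
    refine le_trans ?_ hlogs
    have hb' : (0 : ℝ) < b := by exact_mod_cast Nat.pos_of_ne_zero hb
    have hs' : (0 : ℝ) < s := by exact_mod_cast Nat.pos_of_ne_zero hs0
    have g1 : Real.log n = 2 * Real.log b + Real.log s := by
      rw [← e]
      push_cast
      rw [Real.log_mul (by positivity) (by positivity), Real.log_pow]
      norm_num
    have hl0 : 0 < l := by linarith
    have g2 : Real.log b ≤ 3 * L := by
      calc Real.log b ≤ Real.log (l ^ 3) := by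
            apply Real.log_le_log hb'
            exact le_trans (by exact_mod_cast hbM) hM2
        _ = 3 * L := by rw [Real.log_pow, ← hL]; norm_num
    have g3 : l - 3 * L ≤ Real.log n := by
      calc l - 3 * L = Real.log (x / l ^ 3) := by
            rw [Real.log_div hx0.ne' (by positivity), Real.log_pow, ← hL, ← hl]; norm_num
        _ ≤ _ := Real.log_le_log (by positivity) hnx
    linarith
  have c0 : (S.card : ℝ) ≤ A1.card + A2.card + A3.card := by
    have h1 := (Finset.card_le_card hsub).trans ((Finset.card_union_le _ _).trans
      (Nat.add_le_add_right (Finset.card_union_le _ _) _))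
    exact_mod_cast h1
  have hl0 : 0 < l := by linarith
  have c1 : (A1.card : ℝ) ≤ x / l * W := by
    have : (A1.card : ℝ) ≤ x / l ^ 3 := by
      rw [hA1, Nat.card_Icc, Nat.add_sub_cancel]
      exact Nat.floor_le (by positivity)
    calc _ ≤ _ := this
      _ = x / l * (1 / l ^ 2) := by field_simp
      _ ≤ _ := by gcongr
  have c2 : (A2.card : ℝ) ≤ 2 * (x / l * W) := by
    calc (A2.card : ℝ) ≤ N / M := aux_E N M hM0
      _ ≤ x / (l ^ 3 / 2) := by gcongr
      _ = 2 * (x / l * (1 / l ^ 2)) := by field_simp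
      _ ≤ _ := by gcongr
  have hlog4 : 0 ≤ Real.log 4 := Real.log_nonneg (by norm_num)
  have c3 : (A3.card : ℝ) ≤ 2 * Real.log 4 * (Real.exp (2 * c) * G * K) * (x / l) * W := by
    have h1 : (A3.card : ℝ) * (l / 2) ≤ ∑ n ∈ A3, ∑ p ∈ n.primeFactors, Real.log p := by
      rw [← nsmul_eq_mul]
      apply Finset.card_nsmul_le_sum
      intro n hn
      exact (mem_filter.1 hn).2
    have h2 : ∑ n ∈ A3, ∑ p ∈ n.primeFactors, Real.log p ≤
        ∑ n ∈ S, ∑ p ∈ n.primeFactors, Real.log p := by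
      apply Finset.sum_le_sum_of_subset_of_nonneg (Finset.filter_subset _ _)
      intro n _ _
      apply Finset.sum_nonneg
      intro p hp
      exact Real.log_nonneg (by exact_mod_cast (Nat.prime_of_mem_primeFactors hp).one_lt.le)
    have h3 := aux_cnt N (k + 1)
    rw [Nat.add_sub_cancel] at h3
    have h4 : (A3.card : ℝ) * (l / 2) ≤ Real.log 4 * x * (Real.exp (2 * c) * W * G * K) := by
      refine h1.trans (h2.trans (h3.trans ?_))
      gcongr
      refine hD.trans ?_
      gcongr
    rw [← le_div_iff₀ (by positivity)] at h4
    refine h4.trans (le_of_eq ?_)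
    field_simp
  have hpos : 0 < x / l * W := by positivity
  calc (S.card : ℝ) ≤ _ := c0
    _ ≤ x / l * W + 2 * (x / l * W) +
        2 * Real.log 4 * (Real.exp (2 * c) * G * K) * (x / l) * W := by gcongr
    _ < (4 + 2 * Real.log 4 * (Real.exp (2 * c) * G * K)) * (x / l) * W := by
      nlinarith
end

section
/- For every δ > 0 there exists a constant C = C(δ) such that for all sufficiently large real x and every integer i with 2 ≤ i ≤ (1 − δ) log log x, the number of positive integers n ≤ x with Ω(n) ≤ i is at most C · x · (log x)^{α − α log α − 1}, where α = (i − 1)/log log x. -/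
open Filter Topology in
lemma aux_zeta_bound {s : ℝ} (hs : 1 < s) :
    ∑' n : ℕ, ((n : ℝ) ^ s)⁻¹ ≤ 1 + 1 / (s - 1) := by
  have h1 := ZetaAsymptotics.zeta_limit_aux1 hs
  have h2 : 0 ≤ ZetaAsymptotics.termTSum s :=
    tsum_nonneg fun n => ZetaAsymptotics.term_nonneg _ _
  have hsum : Summable fun n : ℕ => ((n : ℝ) ^ s)⁻¹ := Real.summable_nat_rpow_inv.2 hs
  have h3 := hsum.tsum_eq_zero_add
  have h0 : (((0 : ℕ) : ℝ) ^ s)⁻¹ = 0 := by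
    rw [Nat.cast_zero, Real.zero_rpow (by linarith)]; simp
  rw [h3, h0, zero_add]
  have h4 : ∑' n : ℕ, (((n + 1 : ℕ) : ℝ) ^ s)⁻¹ = ∑' n : ℕ, 1 / (n + 1 : ℝ) ^ s := by
    refine tsum_congr fun n => ?_
    push_cast
    rw [one_div]
  rw [h4]
  nlinarith [mul_nonneg (by linarith : 0 ≤ s) h2]

noncomputable def auxF (z s : ℝ) (hs : 1 < s) : ℕ →*₀ ℝ where
  toFun n := if n = 0 then 0 else z ^ (ArithmeticFunction.cardFactors n) * ((n : ℝ) ^ s)⁻¹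
  map_zero' := by simp
  map_one' := by simp
  map_mul' m n := by
    by_cases hm : m = 0
    · simp [hm]
    by_cases hn : n = 0
    · simp [hn]
    simp only [hm, hn, mul_eq_zero, or_self, if_false]
    rw [ArithmeticFunction.cardFactors_mul hm hn, pow_add, Nat.cast_mul,
      Real.mul_rpow (Nat.cast_nonneg _) (Nat.cast_nonneg _), mul_inv]
    ring

lemma auxF_apply {z s : ℝ} (hs : 1 < s) {n : ℕ} (hn : n ≠ 0) :
    auxF z s hs n = z ^ (ArithmeticFunction.cardFactors n) * ((n : ℝ) ^ s)⁻¹ := by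
  change (if n = 0 then 0 else _) = _
  rw [if_neg hn]

lemma auxF_nonneg {z s : ℝ} (hz : 0 ≤ z) (hs : 1 < s) (n : ℕ) : 0 ≤ auxF z s hs n := by
  by_cases hn : n = 0
  · simp [hn]
  · rw [auxF_apply hs hn]; positivity

lemma auxF_le {z s : ℝ} (hz : 0 ≤ z) (hz1 : z ≤ 1) (hs : 1 < s) (n : ℕ) :
    auxF z s hs n ≤ ((n : ℝ) ^ s)⁻¹ := by
  by_cases hn : n = 0
  · rw [hn, map_zero]; positivity
  · rw [auxF_apply hs hn]
    exact mul_le_of_le_one_left (by positivity) (pow_le_one₀ hz hz1)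

lemma auxF_summable {z s : ℝ} (hz : 0 ≤ z) (hz1 : z ≤ 1) (hs : 1 < s) :
    Summable (auxF z s hs) :=
  Summable.of_nonneg_of_le (auxF_nonneg hz hs) (auxF_le hz hz1 hs)
    (Real.summable_nat_rpow_inv.2 hs)

lemma auxF_summable_norm {z s : ℝ} (hz : 0 ≤ z) (hz1 : z ≤ 1) (hs : 1 < s) :
    Summable (‖auxF z s hs ·‖) := (auxF_summable hz hz1 hs).norm

lemma aux_bern {z t : ℝ} (hz : 0 ≤ z) (hz1 : z ≤ 1) (ht : t < 1) (ht0 : 0 ≤ t) :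
    (1 - z * t)⁻¹ ≤ ((1 - t)⁻¹) ^ z := by
  have h := rpow_one_add_le_one_add_mul_self (s := -t) (by linarith) hz hz1
  rw [Real.inv_rpow (by linarith)]
  apply inv_anti₀ (Real.rpow_pos_of_pos (by linarith) _)
  have e : 1 + -t = 1 - t := by ring
  rw [e] at h
  linarith

lemma auxF_tsum_le {z s : ℝ} (hz : 0 ≤ z) (hz1 : z ≤ 1) (hs : 1 < s) :
    ∑' n, auxF z s hs n ≤ (1 + 1 / (s - 1)) ^ z := by
  have h1 := EulerProduct.eulerProduct_completely_multiplicative (auxF_summable_norm hz hz1 hs)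
  have h2 := EulerProduct.eulerProduct_completely_multiplicative
    (auxF_summable_norm zero_le_one le_rfl hs)
  have h3 := h2.rpow_const (p := z) (Or.inr hz)
  have hle : ∑' n, auxF z s hs n ≤ (∑' n, auxF 1 s hs n) ^ z := by
    refine le_of_tendsto_of_tendsto' h1 h3 fun N => ?_
    have key : ∀ p ∈ Nat.primesBelow N, 0 ≤ (((p : ℕ) : ℝ) ^ s)⁻¹ ∧ (((p : ℕ) : ℝ) ^ s)⁻¹ < 1 ∧
        auxF z s hs p = z * ((p : ℝ) ^ s)⁻¹ ∧ auxF 1 s hs p = ((p : ℝ) ^ s)⁻¹ := by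
      intro p hp
      have hpp := Nat.prime_of_mem_primesBelow hp
      refine ⟨by positivity, ?_, ?_, ?_⟩
      · apply inv_lt_one_of_one_lt₀
        exact Real.one_lt_rpow (by exact_mod_cast hpp.one_lt) (by linarith)
      · rw [auxF_apply hs hpp.ne_zero, ArithmeticFunction.cardFactors_apply_prime hpp, pow_one]
      · rw [auxF_apply hs hpp.ne_zero, one_pow, one_mul]
    rw [← Real.finsetProd_rpow]
    · refine Finset.prod_le_prod ?_ ?_
      · intro p hp
        obtain ⟨a, b, c, d⟩ := key p hp
        rw [c]
        apply inv_nonneg.2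
        nlinarith
      · intro p hp
        obtain ⟨a, b, c, d⟩ := key p hp
        rw [c, d]
        exact aux_bern hz hz1 b a
    · intro p hp
      obtain ⟨a, b, c, d⟩ := key p hp
      rw [d]
      exact inv_nonneg.2 (by linarith)
  refine hle.trans ?_
  apply Real.rpow_le_rpow (tsum_nonneg (auxF_nonneg zero_le_one hs)) _ hz
  refine le_trans ?_ (aux_zeta_bound hs)
  exact (auxF_summable zero_le_one le_rfl hs).tsum_le_tsum (auxF_le zero_le_one le_rfl hs)
    (Real.summable_nat_rpow_inv.2 hs)

lemma aux_rankin {z x : ℝ} (hz : 0 ≤ z) (hz1 : z ≤ 1) (hx : 1 ≤ Real.log x) (hx0 : 0 < x) :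
    ∑ m ∈ Finset.Icc 1 ⌊x⌋₊, z ^ (ArithmeticFunction.cardFactors m) * (m : ℝ)⁻¹ ≤
      Real.exp 1 * (2 * Real.log x ^ z) := by
  have hl : 0 < Real.log x := by linarith
  have hs : 1 < 1 + 1 / Real.log x := by have : 0 < 1 / Real.log x := by positivity
                                         linarith
  have hterm : ∀ m ∈ Finset.Icc 1 ⌊x⌋₊, z ^ (ArithmeticFunction.cardFactors m) * (m : ℝ)⁻¹ ≤
      Real.exp 1 * auxF z _ hs m := by
    intro m hm
    rw [Finset.mem_Icc] at hm
    have hm0 : m ≠ 0 := by omega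
    have hmx : (m : ℝ) ≤ x := (Nat.le_floor_iff hx0.le).1 hm.2
    have hmp : (0 : ℝ) < m := by exact_mod_cast hm.1
    rw [auxF_apply hs hm0, Real.rpow_add hmp, Real.rpow_one, mul_inv]
    have h : (m : ℝ) ^ (1 / Real.log x) ≤ Real.exp 1 := by
      rw [Real.rpow_def_of_pos hmp]
      apply Real.exp_le_exp.2
      rw [mul_one_div, div_le_one hl]
      exact Real.log_le_log hmp hmx
    have hp : 0 < (m : ℝ) ^ (1 / Real.log x) := Real.rpow_pos_of_pos hmp _
    have h' : 1 ≤ Real.exp 1 * ((m : ℝ) ^ (1 / Real.log x))⁻¹ := by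
      rw [← div_eq_mul_inv, one_le_div hp]; exact h
    have hn : 0 ≤ z ^ (ArithmeticFunction.cardFactors m) * (m : ℝ)⁻¹ := by positivity
    nlinarith [mul_le_mul_of_nonneg_left h' hn]
  refine (Finset.sum_le_sum hterm).trans ?_
  rw [← Finset.mul_sum]
  refine mul_le_mul_of_nonneg_left ?_ (Real.exp_pos _).le
  refine ((auxF_summable hz hz1 hs).sum_le_tsum _ fun n _ => auxF_nonneg hz hs n).trans ?_
  refine (auxF_tsum_le hz hz1 hs).trans ?_
  have e : 1 + 1 / (1 + 1 / Real.log x - 1) = 1 + Real.log x := by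
    rw [add_sub_cancel_left, one_div_one_div]
  rw [e]
  have : (1 + Real.log x) ^ z ≤ (2 * Real.log x) ^ z :=
    Real.rpow_le_rpow (by linarith) (by linarith) hz
  refine this.trans ?_
  rw [Real.mul_rpow (by norm_num) hl.le]
  refine mul_le_mul_of_nonneg_right ?_ (Real.rpow_nonneg hl.le _)
  calc (2 : ℝ) ^ z ≤ 2 ^ (1 : ℝ) := Real.rpow_le_rpow_of_exponent_le (by norm_num) hz1
    _ = 2 := Real.rpow_one 2

open ArithmeticFunction in
lemma aux_logsum {x : ℝ} (hx0 : 0 ≤ x) (i : ℕ) :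
    ∑ n ∈ (Finset.Icc 1 ⌊x⌋₊).filter (fun n => cardFactors n ≤ i + 1), Real.log n ≤
      ((Real.log 4 + 4) * x) *
        ∑ m ∈ (Finset.Icc 1 ⌊x⌋₊).filter (fun n => cardFactors n ≤ i), (m : ℝ)⁻¹ := by
  set S := (Finset.Icc 1 ⌊x⌋₊).filter (fun n => cardFactors n ≤ i + 1)
  set T := (Finset.Icc 1 ⌊x⌋₊).filter (fun n => cardFactors n ≤ i)
  have h1 : ∀ n ∈ S, Real.log n ≤ ∑ m ∈ T, if m ∣ n then vonMangoldt (n / m) else 0 := by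
    intro n hn
    simp only [S, Finset.mem_filter, Finset.mem_Icc] at hn
    obtain ⟨⟨hn1, hnx⟩, hnO⟩ := hn
    rw [← vonMangoldt_sum, ← Nat.sum_div_divisors n (fun d => vonMangoldt d),
      ← Finset.sum_filter]
    refine le_of_eq ?_
    symm
    apply Finset.sum_subset
    · intro m hm
      rw [Finset.mem_filter] at hm
      exact Nat.mem_divisors.2 ⟨hm.2, by omega⟩
    · intro m hm hmT
      have hd := Nat.dvd_of_mem_divisors hm
      obtain ⟨k, rfl⟩ := hd
      have hm0 : m ≠ 0 := by rintro rfl; simp at hn1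
      have hk0 : k ≠ 0 := by rintro rfl; simp at hn1
      rw [Nat.mul_div_cancel_left _ (Nat.pos_of_ne_zero hm0)]
      rw [cardFactors_mul hm0 hk0] at hnO
      have hmx : m ≤ ⌊x⌋₊ := (Nat.le_mul_of_pos_right m (Nat.pos_of_ne_zero hk0)).trans hnx
      have hOm : ¬ cardFactors m ≤ i := by
        intro h
        apply hmT
        simp only [T, Finset.mem_filter, Finset.mem_Icc]
        exact ⟨⟨⟨Nat.pos_of_ne_zero hm0, hmx⟩, h⟩, Dvd.intro _ rfl⟩
      have : cardFactors k = 0 := by omega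
      rcases (cardFactors_eq_zero_iff_eq_zero_or_one).1 this with h | h
      · exact absurd h hk0
      · rw [h, vonMangoldt_apply_one]
  refine (Finset.sum_le_sum h1).trans ?_
  rw [Finset.sum_comm, Finset.mul_sum]
  refine Finset.sum_le_sum fun m hm => ?_
  simp only [T, Finset.mem_filter, Finset.mem_Icc] at hm
  have hmp : (0 : ℝ) < m := by exact_mod_cast hm.1.1
  have h2 := Chebyshev.psi_le_const_mul_self (x := x / m) (by positivity)
  have h3 : (Real.log 4 + 4) * (x / m) = (Real.log 4 + 4) * x * (m : ℝ)⁻¹ := by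
    rw [div_eq_mul_inv]; ring
  rw [← h3]
  refine le_trans ?_ h2
  rw [Chebyshev.psi, ← Finset.sum_filter]
  have hinj : Set.InjOn (fun a => m * a) (Finset.Ioc 0 ⌊x / m⌋₊ : Finset ℕ) := by
    intro a _ b _ h
    exact Nat.eq_of_mul_eq_mul_left hm.1.1 h
  have h4 : ∑ a ∈ Finset.Ioc 0 ⌊x / m⌋₊, vonMangoldt a =
      ∑ n ∈ (Finset.Ioc 0 ⌊x / m⌋₊).image (fun a => m * a), vonMangoldt (n / m) := by
    rw [Finset.sum_image hinj]
    refine Finset.sum_congr rfl fun a _ => ?_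
    rw [Nat.mul_div_cancel_left _ hm.1.1]
  rw [h4]
  refine Finset.sum_le_sum_of_subset_of_nonneg ?_ fun _ _ _ => vonMangoldt_nonneg
  intro n hn
  simp only [S, Finset.mem_filter, Finset.mem_Icc] at hn
  obtain ⟨⟨⟨hn1, hnx⟩, _⟩, ⟨k, rfl⟩⟩ := hn
  refine Finset.mem_image.2 ⟨k, ?_, rfl⟩
  rw [Finset.mem_Ioc]
  refine ⟨Nat.pos_of_ne_zero (by rintro rfl; simp at hn1), ?_⟩
  apply Nat.le_floor
  rw [le_div_iff₀ hmp]
  have := (Nat.le_floor_iff hx0).1 hnx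
  push_cast at this
  linarith

open ArithmeticFunction in
lemma aux_recip {z x : ℝ} (hz : 0 < z) (hz1 : z ≤ 1) (hx : 1 ≤ Real.log x) (hx0 : 0 < x) (i : ℕ) :
    ∑ m ∈ (Finset.Icc 1 ⌊x⌋₊).filter (fun n => cardFactors n ≤ i), (m : ℝ)⁻¹ ≤
      (z ^ i)⁻¹ * (Real.exp 1 * (2 * Real.log x ^ z)) := by
  have hzi : 0 < z ^ i := by positivity
  rw [inv_mul_eq_div, le_div_iff₀ hzi, Finset.sum_mul]
  refine le_trans ?_ (aux_rankin hz.le hz1 hx hx0)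
  refine le_trans ?_ (Finset.sum_le_sum_of_subset_of_nonneg
    (Finset.filter_subset (fun n => cardFactors n ≤ i) _) fun _ _ _ => by positivity)
  refine Finset.sum_le_sum fun m hm => ?_
  rw [mul_comm]
  refine mul_le_mul_of_nonneg_right ?_ (by positivity)
  exact pow_le_pow_of_le_one hz.le hz1 (Finset.mem_filter.1 hm).2

open ArithmeticFunction in
lemma aux_count {x : ℝ} (hx : 1 ≤ Real.log x) (hx0 : 0 < x) (i : ℕ) :
    (((Finset.Icc 1 ⌊x⌋₊).filter (fun n => cardFactors n ≤ i)).card : ℝ) ≤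
      2 * x / Real.log x + 2 / Real.log x *
    ∑ n ∈ (Finset.Icc 1 ⌊x⌋₊).filter (fun n => cardFactors n ≤ i), Real.log n := by
  have hl : 0 < Real.log x := by linarith
  set S := (Finset.Icc 1 ⌊x⌋₊).filter (fun n => cardFactors n ≤ i)
  have hsq : Real.sqrt x ≤ 2 * x / Real.log x := by
    rw [le_div_iff₀ hl]
    have h1 : Real.log x = 2 * Real.log (Real.sqrt x) := by
      rw [Real.log_sqrt hx0.le]; ring
    have h2 := Real.log_le_self (Real.sqrt_nonneg x)
    have h3 := Real.mul_self_sqrt hx0.le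
    nlinarith [Real.sqrt_nonneg x]
  have hcard : (S.card : ℝ) = ((S.filter (fun n : ℕ => (n : ℝ) ≤ Real.sqrt x)).card : ℝ) +
      ((S.filter (fun n : ℕ => ¬ (n : ℝ) ≤ Real.sqrt x)).card : ℝ) := by
    rw [← Nat.cast_add, Finset.card_filter_add_card_filter_not]
  rw [hcard]
  apply add_le_add
  · refine le_trans ?_ hsq
    have : S.filter (fun n : ℕ => (n : ℝ) ≤ Real.sqrt x) ⊆ Finset.Icc 1 ⌊Real.sqrt x⌋₊ := by
      intro n hn
      simp only [S, Finset.mem_filter, Finset.mem_Icc] at hn ⊢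
      exact ⟨hn.1.1.1, Nat.le_floor hn.2⟩
    have h := Finset.card_le_card this
    rw [Nat.card_Icc, Nat.add_sub_cancel] at h
    exact (Nat.cast_le.2 h).trans (Nat.floor_le (Real.sqrt_nonneg x))
  · have hpos : ∀ n ∈ S, 0 ≤ Real.log (n : ℝ) := fun n _ => Real.log_natCast_nonneg n
    have h1 : ∑ n ∈ S.filter (fun n : ℕ => ¬ (n : ℝ) ≤ Real.sqrt x), Real.log (n : ℝ) ≤
        ∑ n ∈ S, Real.log (n : ℝ) :=
      Finset.sum_le_sum_of_subset_of_nonneg (Finset.filter_subset _ _) fun n hn _ => hpos n hn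
    have h2 : ((S.filter (fun n : ℕ => ¬ (n : ℝ) ≤ Real.sqrt x)).card : ℝ) * (Real.log x / 2) ≤
        ∑ n ∈ S.filter (fun n : ℕ => ¬ (n : ℝ) ≤ Real.sqrt x), Real.log (n : ℝ) := by
      rw [← nsmul_eq_mul]
      apply Finset.card_nsmul_le_sum
      intro n hn
      rw [← Real.log_sqrt hx0.le]
      exact Real.log_le_log (Real.sqrt_pos.2 hx0) (not_le.1 (Finset.mem_filter.1 hn).2).le
    have h3 := h2.trans h1
    rw [div_mul_eq_mul_div, le_div_iff₀ hl]
    linarith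


/-- For every `δ > 0` there is a constant `C` such that for all sufficiently large `x` and
every integer `i` with `2 ≤ i ≤ (1 - δ) log log x`, the number of positive integers `n ≤ x`
with `Ω(n) ≤ i` is at most `C · x · (log x)^{α - α log α - 1}` where `α = (i-1)/log log x`. -/
theorem count_small_Omega_rpow_bound :
    ∀ δ : ℝ, 0 < δ → ∃ C : ℝ, ∃ X : ℝ, ∀ x : ℝ, X ≤ x →
      ∀ i : ℕ, 2 ≤ i → (i : ℝ) ≤ (1 - δ) * Real.log (Real.log x) →
      (((Finset.Icc 1 ⌊x⌋₊).filter fun n => n.primeFactorsList.length ≤ i).card : ℝ) ≤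
        C * x * Real.log x ^
          ((((i : ℝ) - 1) / Real.log (Real.log x)) -
            (((i : ℝ) - 1) / Real.log (Real.log x)) *
              Real.log (((i : ℝ) - 1) / Real.log (Real.log x)) - 1) := by
  intro δ hδ
  refine ⟨2 + 2 * ((Real.log 4 + 4) * (Real.exp 1 * 2)), Real.exp (Real.exp 1), ?_⟩
  intro x hx i hi hiL
  have hx0 : 0 < x := (Real.exp_pos _).trans_le hx
  have hl : Real.exp 1 ≤ Real.log x := (Real.le_log_iff_exp_le hx0).2 hx
  have hl0 : 0 < Real.log x := (Real.exp_pos _).trans_le hl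
  have hl1 : 1 ≤ Real.log x := by have := Real.add_one_le_exp 1; linarith
  have hL : 1 ≤ Real.log (Real.log x) := (Real.le_log_iff_exp_le hl0).2 hl
  obtain ⟨j, rfl⟩ : ∃ j, i = j + 1 := ⟨i - 1, by omega⟩
  have hj : 1 ≤ j := by omega
  have hj' : (1 : ℝ) ≤ j := by exact_mod_cast hj
  have ej : ((j + 1 : ℕ) : ℝ) - 1 = j := by push_cast; ring
  rw [ej]
  push_cast at hiL
  set L := Real.log (Real.log x) with hLdef
  set α := (j : ℝ) / L with hα
  have hα0 : 0 < α := by positivity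
  have hα1 : α ≤ 1 := by
    rw [hα, div_le_one (by linarith)]
    nlinarith
  have hαL : α * L = j := by rw [hα]; field_simp
  have hpow : Real.log x ^ (α - α * Real.log α - 1) =
      (α ^ j)⁻¹ * Real.log x ^ α * (Real.log x)⁻¹ := by
    rw [Real.rpow_sub hl0, Real.rpow_sub hl0, Real.rpow_one]
    have : Real.log x ^ (α * Real.log α) = α ^ j := by
      rw [Real.rpow_def_of_pos hl0, ← Real.rpow_natCast, Real.rpow_def_of_pos hα0, ← hαL]
      congr 1; ring
    rw [this]
    field_simp
  have hM : 1 ≤ (α ^ j)⁻¹ * Real.log x ^ α := by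
    have h1 : 1 ≤ (α ^ j)⁻¹ := (one_le_inv₀ (by positivity)).2 (pow_le_one₀ hα0.le hα1)
    have h2 : 1 ≤ Real.log x ^ α := Real.one_le_rpow hl1 hα0.le
    nlinarith
  have hA := aux_count hl1 hx0 (j + 1)
  have hB := aux_logsum hx0.le j
  have hC := aux_recip hα0 hα1 hl1 hx0 j
  simp only [← ArithmeticFunction.cardFactors_apply]
  refine hA.trans ?_
  rw [hpow]
  set M := (α ^ j)⁻¹ * Real.log x ^ α with hMdef
  have hK : 0 ≤ Real.log 4 + 4 := by have := Real.log_nonneg (by norm_num : (1 : ℝ) ≤ 4); linarith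
  have hD := hB.trans (mul_le_mul_of_nonneg_left hC (mul_nonneg hK hx0.le))
  have hE := mul_le_mul_of_nonneg_left hD (by positivity : 0 ≤ 2 / Real.log x)
  have hF : 2 * x / Real.log x ≤ 2 * x / Real.log x * M :=
    le_mul_of_one_le_right (by positivity) hM
  refine (add_le_add hF hE).trans (le_of_eq ?_)
  rw [hMdef]
  field_simp
end
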